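/- Let β ≥ 3 and γ ∈ [0, 1). Then there exists C > 0 such that, with probability tending to 1 as N → ∞, the variable speed random walk on the largest connected component of the Simplified Norros–Reittu graph G_N has mixing time t_mix ≤ log^C N. -/

import Mathlib

open scoped Classical
open Filter

noncomputable section

/-- Edge probability of the Simplified Norros–Reittu graph between (1-based) vertices
`i` and `j` of `[N]`: `1 - exp(-β N^(2γ-1) i^(-γ) j^(-γ))`. -/
def snrEdgeProb (β γ : ℝ) (N i j : ℕ) : ℝ :=
  1 - Real.exp (-(β * (N : ℝ) ^ (2 * γ - 1) * (i : ℝ) ^ (-γ) * (j : ℝ) ^ (-γ)))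

/-- Probability weight of a given simple graph on `[N]` when each edge `{i,j}` (`i ≠ j`)
is present independently with probability `p i j` (indices 1-based). -/
def graphWeight (p : ℕ → ℕ → ℝ) (N : ℕ) (G : SimpleGraph (Fin N)) : ℝ :=
  ∏ i : Fin N, ∏ j : Fin N,
    if i < j then
      (if G.Adj i j then p ((i : ℕ) + 1) ((j : ℕ) + 1)
       else 1 - p ((i : ℕ) + 1) ((j : ℕ) + 1))
    else 1

/-- Probability that the random graph with independent edge probabilities `p` satisfies the
property `A`. -/
def graphProb (p : ℕ → ℕ → ℝ) (N : ℕ) (A : SimpleGraph (Fin N) → Prop) : ℝ :=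
  ∑ G : SimpleGraph (Fin N), if A G then graphWeight p N G else 0

/-- Probability that the Simplified Norros–Reittu graph `G_N` satisfies the property `A`. -/
def snrProb (β γ : ℝ) (N : ℕ) (A : SimpleGraph (Fin N) → Prop) : ℝ :=
  graphProb (snrEdgeProb β γ N) N A

/-- Generator `Q = −(D − A)` of the variable speed random walk on a finite graph:
transition rate `1` across each edge. -/
def vsrwQ {V : Type*} [Fintype V] [DecidableEq V] (G : SimpleGraph V) : Matrix V V ℝ :=
  Matrix.of fun v w => if v = w then -(G.degree v : ℝ) else if G.Adj v w then 1 else 0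

/-- Total variation distance from the uniform stationary distribution at time `t` for the
variable speed random walk on `G`: `d(t) = max_x ½ Σ_y |p_t(x,y) − π(y)|` where
`p_t = exp(tQ)` and `π` is uniform. -/
def vsrwTVDist {V : Type*} [Fintype V] [DecidableEq V] (G : SimpleGraph V) (t : ℝ) : ℝ :=
  ⨆ x : V, (1 / 2) * ∑ y : V,
    |(NormedSpace.exp (t • vsrwQ G)) x y - ((Fintype.card V : ℝ))⁻¹|

/-- Mixing time of the variable speed random walk on `G` at total variation threshold `1/e`:
`t_mix = min{t ≥ 0 : d(t) ≤ 1/e}`. -/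
def vsrwMixingTime {V : Type*} [Fintype V] [DecidableEq V] (G : SimpleGraph V) : ℝ :=
  sInf {t : ℝ | 0 ≤ t ∧ vsrwTVDist G t ≤ (Real.exp 1)⁻¹}

/-- Number of vertices of the connected component of `v` in `G`. -/
def compCard {N : ℕ} (G : SimpleGraph (Fin N)) (v : Fin N) : ℕ :=
  Fintype.card {w : Fin N // G.Reachable v w}

/-!
If every set `S` of at most half of the vertices has vertex boundary at least `|S| / m`, then the
layer-cake formula applied to the squared positive and negative parts of a function (centred at its
median) gives a Poincaré inequality with constant of order `m ^ 2`, hence mixing in time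
of order `m ^ 2 * log N`. If a component violates this expansion, discarding the small pieces of a
violating set leaves a bottleneck: a set `S` whose induced components all have size at least `m` and
whose outer boundary `T` has size at most `|S| / m`.

A bottleneck contains a spanning forest with at most `|S| / m` roots and is not joined to the
complement of `S ∪ T`. When all weights are at least `1` and the edge means are `3 / N * W i * W j`,
with `m` of order `log N`, the at most `|S| / m` choices of roots and of `T` cost only a small
exponential factor in `|S|`. For `|S| ≤ 0.29 * N` the union bound over forests succeeds, since each
forest vertex contributes a factor `3 * exp (-1.1) < 1`; for larger `S` the missing edges alone beat
the number of choices of `S`.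
-/

/-! ### Heat flow on a finite graph -/

theorem le_exp_mul_of_hasDerivAt_le {F F' : ℝ → ℝ} {c : ℝ} (hF : ∀ t, HasDerivAt F (F' t) t)
    (hF' : ∀ t, F' t ≤ -(c * F t)) {t : ℝ} (ht : 0 ≤ t) : F t ≤ Real.exp (-(c * t)) * F 0 := by
  have hderiv (s : ℝ) : HasDerivAt (fun s => Real.exp (c * s) * F s)
      (Real.exp (c * s) * (c * F s + F' s)) s :=
    (((hasDerivAt_id' s).const_mul c).exp.fun_mul (hF s)).congr_deriv (by ring)
  have hanti : Antitone fun s => Real.exp (c * s) * F s := by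
    refine antitone_of_deriv_nonpos (fun s => (hderiv s).differentiableAt) fun s => ?_
    rw [(hderiv s).deriv]
    exact mul_nonpos_of_nonneg_of_nonpos (Real.exp_pos _).le (by linarith [hF' s])
  have h := hanti ht
  simp only [mul_zero, Real.exp_zero, one_mul] at h
  rwa [Real.exp_neg, inv_mul_eq_div, le_div_iff₀' (Real.exp_pos _)]

section HeatFlow

open Matrix

variable {V : Type*} [Fintype V]

/-- The Dirichlet form of the variable speed random walk, `∑ (g v - g w)²` over the edges of `G`;
every edge occurs twice in the double sum, whence the division by `2`. -/
def dirichletEnergy (G : SimpleGraph V) (g : V → ℝ) : ℝ :=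
  (∑ v, ∑ w, if G.Adj v w then (g v - g w) ^ 2 else 0) / 2

variable [DecidableEq V]

open scoped Matrix.Norms.Operator in
theorem hasDerivAt_exp_smul_mulVec (Q : Matrix V V ℝ) (f : V → ℝ) (t : ℝ) :
    HasDerivAt (fun s : ℝ => NormedSpace.exp (s • Q) *ᵥ f)
      (Q *ᵥ NormedSpace.exp (t • Q) *ᵥ f) t := by
  rw [mulVec_mulVec]
  exact (LinearMap.toContinuousLinearMap ((mulVecBilin ℝ ℝ).flip f)).hasFDerivAt.comp_hasDerivAt t
    (hasDerivAt_exp_smul_const' (𝕂 := ℝ) Q t)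

open scoped Matrix.Norms.Operator in
theorem exp_smul_mulVec_of_mulVec_eq_zero {Q : Matrix V V ℝ} {f : V → ℝ} (hf : Q *ᵥ f = 0)
    (t : ℝ) : NormedSpace.exp (t • Q) *ᵥ f = f := by
  have hderiv (s : ℝ) : HasDerivAt (fun s : ℝ => NormedSpace.exp (s • Q) *ᵥ f) 0 s := by
    have hcomm : Commute Q (NormedSpace.exp (s • Q)) :=
      ((Commute.refl Q).smul_right s).exp_right
    have h := hasDerivAt_exp_smul_mulVec Q f s
    rwa [mulVec_mulVec, hcomm.eq, ← mulVec_mulVec, hf, mulVec_zero] at h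
  simpa using is_const_of_deriv_eq_zero (fun s => (hderiv s).differentiableAt)
    (fun s => (hderiv s).deriv) t 0

theorem sum_exp_smul_mulVec {Q : Matrix V V ℝ} (hQ : Q.IsSymm) (h1 : Q *ᵥ 1 = 0)
    (f : V → ℝ) (t : ℝ) : ∑ v, (NormedSpace.exp (t • Q) *ᵥ f) v = ∑ v, f v := by
  have hsymm : (NormedSpace.exp (t • Q)).IsSymm := (hQ.smul t).exp
  rw [← one_dotProduct, ← one_dotProduct f, dotProduct_mulVec, ← mulVec_transpose, hsymm.eq,
    exp_smul_mulVec_of_mulVec_eq_zero h1]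

variable {G : SimpleGraph V}

theorem vsrwQ_eq_neg_lapMatrix (G : SimpleGraph V) : vsrwQ G = -G.lapMatrix ℝ := by
  ext v w
  by_cases h : v = w
  · subst h
    simp [vsrwQ, SimpleGraph.lapMatrix, SimpleGraph.degMatrix]
  · simp [vsrwQ, SimpleGraph.lapMatrix, SimpleGraph.degMatrix, SimpleGraph.adjMatrix_apply, h]

theorem vsrwQ_isSymm (G : SimpleGraph V) : (vsrwQ G).IsSymm := by
  rw [vsrwQ_eq_neg_lapMatrix]
  exact (G.isSymm_lapMatrix ℝ).neg

theorem vsrwQ_mulVec_one (G : SimpleGraph V) : vsrwQ G *ᵥ 1 = 0 := by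
  rw [vsrwQ_eq_neg_lapMatrix, neg_mulVec, neg_eq_zero]
  exact G.lapMatrix_mulVec_const_eq_zero

theorem dotProduct_vsrwQ_mulVec (G : SimpleGraph V) (g : V → ℝ) :
    g ⬝ᵥ vsrwQ G *ᵥ g = -dirichletEnergy G g := by
  rw [vsrwQ_eq_neg_lapMatrix, neg_mulVec, dotProduct_neg, ← toLinearMap₂'_apply',
    SimpleGraph.lapMatrix_toLinearMap₂', dirichletEnergy]

theorem sum_sq_exp_smul_vsrwQ_mulVec_le {A : ℝ} (hA : 0 < A)
    (hPoincare : ∀ g : V → ℝ, ∑ v, g v = 0 → ∑ v, g v ^ 2 ≤ A * dirichletEnergy G g)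
    {f : V → ℝ} (hf : ∑ v, f v = 0) {t : ℝ} (ht : 0 ≤ t) :
    ∑ v, (NormedSpace.exp (t • vsrwQ G) *ᵥ f) v ^ 2 ≤
      Real.exp (-(2 / A * t)) * ∑ v, f v ^ 2 := by
  set u : ℝ → V → ℝ := fun s => NormedSpace.exp (s • vsrwQ G) *ᵥ f with hu
  have hderiv (s : ℝ) :
      HasDerivAt (fun s => ∑ v, u s v ^ 2) (-(2 * dirichletEnergy G (u s))) s := by
    have h := HasDerivAt.fun_sum (u := Finset.univ) fun v _ =>
      (hasDerivAt_pi.1 (hasDerivAt_exp_smul_mulVec (vsrwQ G) f s) v).fun_pow 2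
    refine h.congr_deriv ?_
    rw [← mul_neg, ← dotProduct_vsrwQ_mulVec, dotProduct, Finset.mul_sum]
    exact Finset.sum_congr rfl fun v _ => by simp only [hu]; ring
  have hdecay (s : ℝ) : -(2 * dirichletEnergy G (u s)) ≤ -(2 / A * ∑ v, u s v ^ 2) := by
    have h := hPoincare (u s) <| by
      rw [sum_exp_smul_mulVec (vsrwQ_isSymm G) (vsrwQ_mulVec_one G), hf]
    rw [neg_le_neg_iff, div_mul_eq_mul_div, div_le_iff₀ hA]
    linarith
  simpa [hu] using le_exp_mul_of_hasDerivAt_le hderiv hdecay ht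

theorem sum_sq_single_sub_inv_card_le (x : V) :
    ∑ v, (Pi.single x 1 - (Fintype.card V : ℝ)⁻¹ • 1 : V → ℝ) v ^ 2 ≤ 1 := by
  set n : ℝ := (Fintype.card V : ℝ)
  have hn : n ≠ 0 := Nat.cast_ne_zero.2 (Fintype.card_pos_iff.2 ⟨x⟩).ne'
  have hinv : 0 ≤ n⁻¹ := by positivity
  have hterm (v : V) : (Pi.single x 1 - n⁻¹ • 1 : V → ℝ) v ^ 2 =
      (Pi.single x (1 - 2 * n⁻¹) : V → ℝ) v + n⁻¹ ^ 2 := by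
    rcases eq_or_ne v x with rfl | hv
    · simp; ring
    · simp [hv]
  simp only [hterm, Finset.sum_add_distrib, Finset.sum_pi_single', Finset.mem_univ, if_true,
    Finset.sum_const, Finset.card_univ, nsmul_eq_mul]
  rw [sq, mul_inv_cancel_left₀ hn]
  linarith

theorem vsrwTVDist_le_of_poincare {A : ℝ} (hA : 0 < A)
    (hPoincare : ∀ g : V → ℝ, ∑ v, g v = 0 → ∑ v, g v ^ 2 ≤ A * dirichletEnergy G g)
    {t : ℝ} (ht : 0 ≤ t) :
    vsrwTVDist G t ≤ √(Fintype.card V) * Real.exp (-(t / A)) / 2 := by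
  refine Real.iSup_le (fun x => ?_) (by positivity)
  set n : ℝ := (Fintype.card V : ℝ)
  have hn : n ≠ 0 := Nat.cast_ne_zero.2 (Fintype.card_pos_iff.2 ⟨x⟩).ne'
  set f : V → ℝ := Pi.single x 1 - n⁻¹ • 1 with hf
  have hf_sum : ∑ v, f v = 0 := by
    simp [hf, n, Finset.sum_sub_distrib, hn]
  have hrow (y : V) : NormedSpace.exp (t • vsrwQ G) x y - n⁻¹ =
      (NormedSpace.exp (t • vsrwQ G) *ᵥ f) y := by
    rw [hf, mulVec_sub, mulVec_smul, exp_smul_mulVec_of_mulVec_eq_zero (vsrwQ_mulVec_one G),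
      mulVec_single_one, ← ((vsrwQ_isSymm G).smul t).exp.apply]
    simp
  have hsq : (∑ y, |(NormedSpace.exp (t • vsrwQ G) *ᵥ f) y|) ^ 2 ≤
      n * Real.exp (-(2 / A * t)) := by
    refine sq_sum_le_card_mul_sum_sq.trans ?_
    simp only [sq_abs, Finset.card_univ]
    refine mul_le_mul_of_nonneg_left ?_ (Nat.cast_nonneg _)
    exact (sum_sq_exp_smul_vsrwQ_mulVec_le hA hPoincare hf_sum ht).trans
      (mul_le_of_le_one_right (Real.exp_pos _).le (sum_sq_single_sub_inv_card_le x))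
  have hsqrt : √(n * Real.exp (-(2 / A * t))) = √n * Real.exp (-(t / A)) := by
    rw [Real.sqrt_mul (Nat.cast_nonneg _), ← Real.exp_half]
    congr 2
    ring
  simp only [hrow]
  rw [one_div, inv_mul_eq_div]
  gcongr
  rw [← hsqrt]
  exact Real.le_sqrt_of_sq_le hsq

theorem vsrwMixingTime_le_of_poincare {A : ℝ} (hA : 0 < A)
    (hPoincare : ∀ g : V → ℝ, ∑ v, g v = 0 → ∑ v, g v ^ 2 ≤ A * dirichletEnergy G g) :
    vsrwMixingTime G ≤ A * (1 + Real.log (Fintype.card V) / 2) := by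
  have ht : 0 ≤ A * (1 + Real.log (Fintype.card V) / 2) := by positivity
  refine csInf_le ⟨0, fun s hs => hs.1⟩ ⟨ht, (vsrwTVDist_le_of_poincare hA hPoincare ht).trans ?_⟩
  rcases Nat.eq_zero_or_pos (Fintype.card V) with h0 | hpos
  · rw [h0, Nat.cast_zero, Real.sqrt_zero, zero_mul, zero_div]
    positivity
  · have hexp : √(Fintype.card V) * Real.exp (-(1 + Real.log (Fintype.card V) / 2)) =
        (Real.exp 1)⁻¹ := by
      rw [neg_add, Real.exp_add, Real.exp_neg (_ / 2), ← Real.log_sqrt (Nat.cast_nonneg _),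
        Real.exp_log (by positivity), Real.exp_neg, mul_left_comm, mul_inv_cancel₀ (by positivity),
        mul_one]
    rw [mul_div_cancel_left₀ _ hA.ne', hexp]
    exact half_le_self (by positivity)

end HeatFlow

/-! ### A vertex Cheeger inequality -/

section LayerCake

open MeasureTheory

variable {V : Type*} [Fintype V]

theorem card_filter_mem_Ico_eq_sum_indicator (lo hi : V → ℝ) (t : ℝ) :
    (({x | t ∈ Set.Ico (lo x) (hi x)} : Finset V).card : ℝ) =
      ∑ x, (Set.Ico (lo x) (hi x)).indicator (1 : ℝ → ℝ) t := by
  simp only [← Finset.sum_boole, Set.indicator_apply, Pi.one_apply]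

theorem integrable_indicator_Ico_one (a b : ℝ) :
    Integrable ((Set.Ico a b).indicator (1 : ℝ → ℝ)) :=
  (integrable_indicator_iff measurableSet_Ico).2
    (integrableOn_const (C := (1 : ℝ)) measure_Ico_lt_top.ne)

theorem integrable_card_filter_mem_Ico (lo hi : V → ℝ) :
    Integrable fun t : ℝ => (({x | t ∈ Set.Ico (lo x) (hi x)} : Finset V).card : ℝ) := by
  simp only [card_filter_mem_Ico_eq_sum_indicator]
  exact integrable_finsetSum _ fun x _ => integrable_indicator_Ico_one _ _

theorem integral_card_filter_mem_Ico {lo hi : V → ℝ} (h : ∀ x, lo x ≤ hi x) :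
    ∫ t, (({x | t ∈ Set.Ico (lo x) (hi x)} : Finset V).card : ℝ) = ∑ x, (hi x - lo x) := by
  simp only [card_filter_mem_Ico_eq_sum_indicator]
  rw [integral_finsetSum _ fun x _ => integrable_indicator_Ico_one _ _]
  refine Finset.sum_congr rfl fun x _ => ?_
  simp [integral_indicator_one measurableSet_Ico, h x]

theorem sum_le_mul_sum_sub_of_card_superlevel_le {a lo hi : V → ℝ} {m : ℝ} (ha : ∀ x, 0 ≤ a x)
    (hlohi : ∀ x, lo x ≤ hi x) (hm : 0 ≤ m)
    (hlevel : ∀ t, 0 ≤ t → (({x | t < a x} : Finset V).card : ℝ) ≤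
      m * ({x | t ∈ Set.Ico (lo x) (hi x)} : Finset V).card) :
    ∑ x, a x ≤ m * ∑ x, (hi x - lo x) := by
  have hsum : ∑ x, a x = ∑ x, (a x - 0) := by simp
  rw [hsum, ← integral_card_filter_mem_Ico ha, ← integral_card_filter_mem_Ico hlohi,
    ← integral_const_mul]
  refine integral_mono (integrable_card_filter_mem_Ico _ _)
    ((integrable_card_filter_mem_Ico lo hi).const_mul m) fun t => ?_
  rcases le_or_gt 0 t with ht | ht
  · simpa only [Set.mem_Ico, ht, true_and] using hlevel t ht
  · simp only [Set.mem_Ico, not_le.2 ht, false_and, Finset.filter_false, Finset.card_empty,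
      Nat.cast_zero]
    positivity

theorem exists_median [Nonempty V] (g : V → ℝ) :
    ∃ c : ℝ, 2 * ({x | c < g x} : Finset V).card ≤ Fintype.card V ∧
      2 * ({x | g x < c} : Finset V).card ≤ Fintype.card V := by
  set I : Finset V := {x | 2 * ({y | g x < g y} : Finset V).card ≤ Fintype.card V} with hI
  have hI_nonempty : I.Nonempty := by
    obtain ⟨x, hx⟩ := Finite.exists_max g
    exact ⟨x, by simp [hI, fun y => (hx y).not_gt]⟩
  obtain ⟨x, hxI, hx_min⟩ := I.exists_min_image g hI_nonempty
  refine ⟨g x, (Finset.mem_filter.1 hxI).2, ?_⟩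
  rcases Finset.eq_empty_or_nonempty {y | g y < g x} with hempty | hbelow
  · simp [hempty]
  · obtain ⟨z, hz, hz_max⟩ := Finset.exists_max_image _ g hbelow
    simp only [Finset.mem_filter, Finset.mem_univ, true_and] at hz hz_max
    have hzI : Fintype.card V < 2 * ({y | g z < g y} : Finset V).card := by
      by_contra hcon
      exact (hx_min z (by simpa [hI] using hcon)).not_gt hz
    have hdisj : Disjoint ({y | g y < g x} : Finset V) ({y | g z < g y} : Finset V) :=
      Finset.disjoint_filter.2 fun y _ hyx hzy => (hz_max y hyx).not_gt hzy
    have hcard := Finset.card_le_univ (Finset.disjUnion _ _ hdisj)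
    rw [Finset.card_disjUnion] at hcard
    omega

end LayerCake

section Cheeger

variable {V : Type*} [Fintype V]

/-- The two-sided vertex boundary of `S`: all endpoints of edges between `S` and its complement. -/
def vertexBoundary (G : SimpleGraph V) (S : Finset V) : Finset V :=
  {x | ∃ y, G.Adj x y ∧ ¬(x ∈ S ↔ y ∈ S)}

/-- Vertex expansion at rate `1 / m`, where the expansion of a set is measured by its two-sided
vertex boundary. -/
def IsVertexExpander (G : SimpleGraph V) (m : ℝ) : Prop :=
  ∀ S : Finset V, 2 * S.card ≤ Fintype.card V → (S.card : ℝ) ≤ m * (vertexBoundary G S).card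

variable {G : SimpleGraph V} {m : ℝ}

theorem mem_vertexBoundary {S : Finset V} {x : V} :
    x ∈ vertexBoundary G S ↔ ∃ y, G.Adj x y ∧ ¬(x ∈ S ↔ y ∈ S) := by
  simp [vertexBoundary]

theorem mem_Ico_of_mem_vertexBoundary_superlevel {f M : V → ℝ} (hf : ∀ x, 0 ≤ f x)
    (hM : ∀ x y, G.Adj x y → |f x - f y| ≤ M x) {t : ℝ} {x : V}
    (hx : x ∈ vertexBoundary G {z | t < f z ^ 2}) :
    t ∈ Set.Ico (max (f x - M x) 0 ^ 2) ((f x + M x) ^ 2) := by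
  obtain ⟨y, hxy, hxor⟩ := mem_vertexBoundary.1 hx
  have hosc := abs_le.1 (hM x y hxy)
  have hlo {z : V} (hz : f x - M x ≤ f z) : max (f x - M x) 0 ^ 2 ≤ f z ^ 2 :=
    pow_le_pow_left₀ (le_max_right _ _) (max_le hz (hf z)) 2
  have hhi {z : V} (hz : f z ≤ f x + M x) : f z ^ 2 ≤ (f x + M x) ^ 2 :=
    pow_le_pow_left₀ (hf z) hz 2
  simp only [Finset.mem_filter, Finset.mem_univ, true_and] at hxor
  rcases lt_or_ge t (f x ^ 2) with htx | htx
  · have hty : f y ^ 2 ≤ t := by_contra fun h => hxor ⟨fun _ => not_le.1 h, fun _ => htx⟩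
    exact ⟨(hlo (by linarith)).trans hty, htx.trans_le (hhi (by linarith))⟩
  · have hty : t < f y ^ 2 := by_contra fun h =>
      hxor ⟨fun h' => absurd h' htx.not_gt, fun h' => absurd h' h⟩
    exact ⟨(hlo (by linarith)).trans htx, hty.trans_le (hhi (by linarith))⟩

theorem IsVertexExpander.sum_sq_le_mul_sum_sub (hG : IsVertexExpander G m) (hm : 0 ≤ m)
    {f M : V → ℝ} (hf : ∀ x, 0 ≤ f x)
    (hsupp : 2 * ({x | 0 < f x} : Finset V).card ≤ Fintype.card V) (hM_nonneg : ∀ x, 0 ≤ M x)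
    (hM : ∀ x y, G.Adj x y → |f x - f y| ≤ M x) :
    ∑ x, f x ^ 2 ≤ m * ∑ x, ((f x + M x) ^ 2 - max (f x - M x) 0 ^ 2) := by
  refine sum_le_mul_sum_sub_of_card_superlevel_le (fun x => sq_nonneg _) (fun x => ?_) hm
    fun t ht => ?_
  · exact pow_le_pow_left₀ (le_max_right _ _)
      (max_le (by linarith [hM_nonneg x]) (by linarith [hf x, hM_nonneg x])) 2
  · have hsub : ({x | t < f x ^ 2} : Finset V) ⊆ ({x | 0 < f x} : Finset V) := fun x hx => by
      have hx : t < f x ^ 2 := by simpa using hx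
      simpa using (hf x).lt_of_ne' (sq_pos_iff.1 (ht.trans_lt hx))
    refine (hG _ ((Nat.mul_le_mul_left 2 (Finset.card_le_card hsub)).trans hsupp)).trans ?_
    gcongr
    intro x hx
    simpa using mem_Ico_of_mem_vertexBoundary_superlevel hf hM hx

theorem mul_sq_sub_sq_le {a r : ℝ} (ha : 0 ≤ a) (hr : 0 ≤ r) (hm : 1 ≤ m) :
    m * ((a + r) ^ 2 - max (a - r) 0 ^ 2) ≤ a ^ 2 / 2 + 9 * m ^ 2 * r ^ 2 := by
  have hdiff : (a + r) ^ 2 - max (a - r) 0 ^ 2 ≤ 4 * a * r + r ^ 2 := by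
    rcases le_total (a - r) 0 with h | h
    · rw [max_eq_right h]; nlinarith
    · rw [max_eq_left h]; nlinarith
  have hm_sq : m ≤ m ^ 2 := le_self_pow₀ hm two_ne_zero
  calc m * ((a + r) ^ 2 - max (a - r) 0 ^ 2)
      ≤ m * (4 * a * r + r ^ 2) := by gcongr
    _ ≤ a ^ 2 / 2 + 8 * (m * r) ^ 2 + m * r ^ 2 := by nlinarith [sq_nonneg (a - 4 * (m * r))]
    _ ≤ a ^ 2 / 2 + 9 * m ^ 2 * r ^ 2 := by
      nlinarith [mul_le_mul_of_nonneg_right hm_sq (sq_nonneg r)]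

theorem IsVertexExpander.sum_sq_le_of_nonneg (hG : IsVertexExpander G m) (hm : 1 ≤ m)
    {f : V → ℝ} (hf : ∀ x, 0 ≤ f x)
    (hsupp : 2 * ({x | 0 < f x} : Finset V).card ≤ Fintype.card V) :
    ∑ x, f x ^ 2 ≤ 36 * m ^ 2 * dirichletEnergy G f := by
  set D : V → ℝ := fun x => ∑ y, if G.Adj x y then (f x - f y) ^ 2 else 0
  have hterm (x y : V) : 0 ≤ if G.Adj x y then (f x - f y) ^ 2 else 0 := by positivity
  have hD_nonneg (x : V) : 0 ≤ D x := Finset.sum_nonneg fun y _ => hterm x y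
  have hosc (x y : V) (hxy : G.Adj x y) : |f x - f y| ≤ √(D x) := by
    refine Real.abs_le_sqrt ?_
    simpa only [if_pos hxy] using Finset.single_le_sum (fun y _ => hterm x y) (Finset.mem_univ y)
  have hhalf : ∑ x, f x ^ 2 ≤ (∑ x, f x ^ 2) / 2 + 9 * m ^ 2 * ∑ x, D x := by
    refine (hG.sum_sq_le_mul_sum_sub (by linarith) hf hsupp (fun x => Real.sqrt_nonneg _)
      hosc).trans ?_
    rw [Finset.mul_sum, Finset.mul_sum, Finset.sum_div, ← Finset.sum_add_distrib]
    refine Finset.sum_le_sum fun x _ => ?_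
    simpa only [Real.sq_sqrt (hD_nonneg x)]
      using mul_sq_sub_sq_le (hf x) (Real.sqrt_nonneg (D x)) hm
  have henergy : ∑ x, D x = 2 * dirichletEnergy G f := by
    rw [dirichletEnergy, mul_div_cancel₀ _ two_ne_zero]
  rw [henergy] at hhalf
  linarith

theorem dirichletEnergy_sub_const (G : SimpleGraph V) (g : V → ℝ) (c : ℝ) :
    dirichletEnergy G (fun x => g x - c) = dirichletEnergy G g := by
  simp only [dirichletEnergy, sub_sub_sub_cancel_right]

theorem dirichletEnergy_posPart_add_negPart_le (G : SimpleGraph V) (f : V → ℝ) :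
    dirichletEnergy G f⁺ + dirichletEnergy G f⁻ ≤ dirichletEnergy G f := by
  simp only [dirichletEnergy, ← add_div, ← Finset.sum_add_distrib]
  gcongr with x _ y _
  split_ifs
  · have hcross (a b : ℝ) : 0 ≤ a⁺ * b⁻ := mul_nonneg (posPart_nonneg a) (negPart_nonneg b)
    have hself (a : ℝ) : a⁺ * a⁻ = 0 := by
      rcases le_total 0 a with h | h
      · rw [negPart_of_nonneg h, mul_zero]
      · rw [posPart_of_nonpos h, zero_mul]
    simp only [Pi.posPart_apply, Pi.negPart_apply]
    conv_rhs => rw [← posPart_sub_negPart (f x), ← posPart_sub_negPart (f y)]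
    nlinarith [hcross (f x) (f y), hcross (f y) (f x), hself (f x), hself (f y)]
  · exact (add_zero 0).le

theorem IsVertexExpander.poincare (hG : IsVertexExpander G m) (hm : 1 ≤ m) {g : V → ℝ}
    (hg : ∑ x, g x = 0) : ∑ x, g x ^ 2 ≤ 36 * m ^ 2 * dirichletEnergy G g := by
  rcases isEmpty_or_nonempty V with hV | hV
  · simp [dirichletEnergy]
  obtain ⟨c, habove, hbelow⟩ := exists_median g
  set f : V → ℝ := fun x => g x - c with hf
  have hsq : ∑ x, g x ^ 2 ≤ ∑ x, f x ^ 2 := by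
    have hexpand (x : V) : f x ^ 2 = g x ^ 2 - 2 * c * g x + c ^ 2 := by rw [hf]; ring
    simp only [hexpand, Finset.sum_add_distrib, Finset.sum_sub_distrib, ← Finset.mul_sum, hg,
      mul_zero, sub_zero]
    exact le_add_of_nonneg_right (Finset.sum_nonneg fun _ _ => sq_nonneg c)
  have hsplit : ∑ x, f x ^ 2 = ∑ x, f⁺ x ^ 2 + ∑ x, f⁻ x ^ 2 := by
    rw [← Finset.sum_add_distrib]
    refine Finset.sum_congr rfl fun x _ => ?_
    rcases le_total 0 (f x) with h | h
    · simp [Pi.posPart_apply, Pi.negPart_apply, posPart_of_nonneg h, negPart_of_nonneg h]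
    · simp [Pi.posPart_apply, Pi.negPart_apply, posPart_of_nonpos h, negPart_of_nonpos h]
  have hpos := hG.sum_sq_le_of_nonneg hm (f := f⁺) (fun x => posPart_nonneg (f x))
    (by simpa [hf, Pi.posPart_apply] using habove)
  have hneg := hG.sum_sq_le_of_nonneg hm (f := f⁻) (fun x => negPart_nonneg (f x))
    (by simpa [hf, Pi.negPart_apply] using hbelow)
  calc ∑ x, g x ^ 2 ≤ ∑ x, f⁺ x ^ 2 + ∑ x, f⁻ x ^ 2 := hsq.trans hsplit.le
    _ ≤ 36 * m ^ 2 * (dirichletEnergy G f⁺ + dirichletEnergy G f⁻) := by linarith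
    _ ≤ 36 * m ^ 2 * dirichletEnergy G f := by
      gcongr
      exact dirichletEnergy_posPart_add_negPart_le G f
    _ = 36 * m ^ 2 * dirichletEnergy G g := by rw [dirichletEnergy_sub_const]

theorem IsVertexExpander.vsrwMixingTime_le [DecidableEq V] (hG : IsVertexExpander G m)
    (hm : 1 ≤ m) : vsrwMixingTime G ≤ 36 * m ^ 2 * (1 + Real.log (Fintype.card V) / 2) :=
  vsrwMixingTime_le_of_poincare (by positivity) fun _ => hG.poincare hm

end Cheeger

/-! ### Bottlenecks -/

section Bottleneck

variable {V : Type*} {G : SimpleGraph V} {S : Finset V} {m : ℕ} {x y : V}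

/-- The subgraph of `G` induced on `S`, as a graph on all of `V` with isolated vertices
outside `S`. -/
abbrev innerGraph (G : SimpleGraph V) (S : Finset V) : SimpleGraph V :=
  (G.induce (S : Set V)).spanningCoe

theorem innerGraph_adj : (innerGraph G S).Adj x y ↔ G.Adj x y ∧ x ∈ S ∧ y ∈ S := by
  simp [SimpleGraph.map_adj]

theorem mem_of_innerGraph_reachable (hx : x ∈ S) (h : (innerGraph G S).Reachable x y) : y ∈ S := by
  obtain ⟨p⟩ := h
  induction p with
  | nil => exact hx
  | cons hadj _ ih => exact ih (innerGraph_adj.1 hadj).2.2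

theorem exists_innerGraph_reachable_adj_notMem (hx : x ∈ S) (hy : y ∉ S) (h : G.Reachable x y) :
    ∃ z ∈ S, (innerGraph G S).Reachable x z ∧ ∃ w ∉ S, G.Adj z w := by
  obtain ⟨p⟩ := h
  induction p with
  | nil => exact absurd hx hy
  | @cons a b _ hadj _ ih =>
    by_cases hb : b ∈ S
    · obtain ⟨z, hz, hbz, hexit⟩ := ih hb hy
      exact ⟨z, hz, (innerGraph_adj.2 ⟨hadj, hx, hb⟩).reachable.trans hbz, hexit⟩
    · exact ⟨a, hx, SimpleGraph.Reachable.refl _, b, hb, hadj⟩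

variable [Fintype V]

/-- The vertex set of the component of `x` in the subgraph of `G` induced on `S`. -/
def innerComponent (G : SimpleGraph V) (S : Finset V) (x : V) : Finset V :=
  {y | (innerGraph G S).Reachable x y}

/-- The vertices outside `S` that have a neighbour in `S`. -/
def outerBoundary (G : SimpleGraph V) (S : Finset V) : Finset V :=
  {y | y ∉ S ∧ ∃ x ∈ S, G.Adj x y}

/-- The part of `S` covered by the components of `G[S]` with at least `m` vertices. -/
def bigPart (G : SimpleGraph V) (m : ℕ) (S : Finset V) : Finset V :=
  {x ∈ S | m ≤ (innerComponent G S x).card}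

/-- A nonempty set of at most half of the vertices, with small outer boundary, all of whose induced
components are large. -/
structure IsBottleneck (G : SimpleGraph V) (m : ℕ) (S : Finset V) : Prop where
  nonempty : S.Nonempty
  two_mul_card_le : 2 * S.card ≤ Fintype.card V
  le_card_innerComponent : ∀ x ∈ S, m ≤ (innerComponent G S x).card
  mul_card_outerBoundary_le : m * (outerBoundary G S).card ≤ S.card

theorem mem_innerComponent : y ∈ innerComponent G S x ↔ (innerGraph G S).Reachable x y := by
  simp [innerComponent]

theorem mem_outerBoundary : y ∈ outerBoundary G S ↔ y ∉ S ∧ ∃ x ∈ S, G.Adj x y := by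
  simp [outerBoundary]

theorem mem_bigPart : x ∈ bigPart G m S ↔ x ∈ S ∧ m ≤ (innerComponent G S x).card := by
  simp [bigPart]

theorem innerComponent_eq_of_reachable (h : (innerGraph G S).Reachable x y) :
    innerComponent G S x = innerComponent G S y := by
  ext z
  simp only [mem_innerComponent]
  exact ⟨h.symm.trans, h.trans⟩

theorem mem_bigPart_of_innerGraph_reachable (hx : x ∈ bigPart G m S)
    (h : (innerGraph G S).Reachable x y) : y ∈ bigPart G m S := by
  rw [mem_bigPart] at hx ⊢
  exact ⟨mem_of_innerGraph_reachable hx.1 h, innerComponent_eq_of_reachable h ▸ hx.2⟩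

theorem innerComponent_subset_innerComponent_bigPart (hx : x ∈ bigPart G m S) :
    innerComponent G S x ⊆ innerComponent G (bigPart G m S) x := by
  intro y hy
  rw [mem_innerComponent] at hy ⊢
  obtain ⟨p⟩ := hy
  induction p with
  | nil => exact SimpleGraph.Reachable.refl _
  | cons hadj _ ih =>
    have hb := mem_bigPart_of_innerGraph_reachable hx hadj.reachable
    exact (innerGraph_adj.2 ⟨(innerGraph_adj.1 hadj).1, hx, hb⟩).reachable.trans (ih hb)

theorem notMem_of_mem_outerBoundary_bigPart (hy : y ∈ outerBoundary G (bigPart G m S)) :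
    y ∉ S := by
  obtain ⟨hy, x, hx, hxy⟩ := mem_outerBoundary.1 hy
  exact fun hyS => hy <| mem_bigPart_of_innerGraph_reachable hx
    (innerGraph_adj.2 ⟨hxy, (mem_bigPart.1 hx).1, hyS⟩).reachable

theorem card_bigPart_le (hG : ∀ T, ¬IsBottleneck G m T) (hS : 2 * S.card ≤ Fintype.card V) :
    (bigPart G m S).card ≤ m * (outerBoundary G (bigPart G m S)).card := by
  by_contra! hcard
  have hle : (bigPart G m S).card ≤ S.card := Finset.card_filter_le _ _
  exact hG (bigPart G m S)
    { nonempty := Finset.card_pos.1 (by omega)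
      two_mul_card_le := by omega
      le_card_innerComponent := fun x hx => (mem_bigPart.1 hx).2.trans
        (Finset.card_le_card (innerComponent_subset_innerComponent_bigPart hx))
      mul_card_outerBoundary_le := hcard.le }

theorem card_sdiff_bigPart_le (hexit : ∀ x ∈ S, ∃ y ∉ S, G.Reachable x y) :
    (S \ bigPart G m S).card ≤ m * ({z ∈ S | ∃ w ∉ S, G.Adj z w} \ bigPart G m S).card := by
  have hcover : S \ bigPart G m S ⊆
      ({z ∈ S | ∃ w ∉ S, G.Adj z w} \ bigPart G m S).biUnion (innerComponent G S) := by
    intro x hx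
    obtain ⟨hxS, hx⟩ := Finset.mem_sdiff.1 hx
    obtain ⟨y, hy, hxy⟩ := hexit x hxS
    obtain ⟨z, hz, hxz, hzw⟩ := exists_innerGraph_reachable_adj_notMem hxS hy hxy
    refine Finset.mem_biUnion.2 ⟨z, Finset.mem_sdiff.2 ⟨Finset.mem_filter.2 ⟨hz, hzw⟩, ?_⟩,
      mem_innerComponent.2 hxz.symm⟩
    exact fun hz => hx (mem_bigPart_of_innerGraph_reachable hz hxz.symm)
  refine (Finset.card_le_card hcover).trans ?_
  rw [mul_comm]
  refine Finset.card_biUnion_le_card_mul _ _ m fun z hz => ?_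
  obtain ⟨hzS, hz⟩ := Finset.mem_sdiff.1 hz
  exact (not_le.1 fun h => hz (mem_bigPart.2 ⟨(Finset.mem_filter.1 hzS).1, h⟩)).le

theorem card_le_mul_card_vertexBoundary (hG : ∀ T, ¬IsBottleneck G m T)
    (hS : 2 * S.card ≤ Fintype.card V) (hexit : ∀ x ∈ S, ∃ y ∉ S, G.Reachable x y) :
    S.card ≤ m * (vertexBoundary G S).card := by
  set B := bigPart G m S
  set X : Finset V := {z ∈ S | ∃ w ∉ S, G.Adj z w} \ B
  have hX {z : V} (hz : z ∈ X) : z ∈ S ∧ ∃ w ∉ S, G.Adj z w :=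
    Finset.mem_filter.1 (Finset.mem_sdiff.1 hz).1
  have hdisj : Disjoint (outerBoundary G B) X :=
    Finset.disjoint_left.2 fun y hy hyX => notMem_of_mem_outerBoundary_bigPart hy (hX hyX).1
  have hsub : outerBoundary G B ∪ X ⊆ vertexBoundary G S := by
    intro y hy
    rw [mem_vertexBoundary]
    rcases Finset.mem_union.1 hy with hy | hy
    · have hyS := notMem_of_mem_outerBoundary_bigPart hy
      obtain ⟨-, x, hx, hxy⟩ := mem_outerBoundary.1 hy
      exact ⟨x, hxy.symm, fun h => hyS (h.2 (mem_bigPart.1 hx).1)⟩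
    · obtain ⟨hyS, w, hw, hyw⟩ := hX hy
      exact ⟨w, hyw, fun h => hw (h.1 hyS)⟩
  calc S.card = (S \ B).card + B.card :=
        (Finset.card_sdiff_add_card_eq_card (Finset.filter_subset _ _)).symm
    _ ≤ m * X.card + m * (outerBoundary G B).card :=
        add_le_add (card_sdiff_bigPart_le hexit) (card_bigPart_le hG hS)
    _ = m * (outerBoundary G B ∪ X).card := by rw [Finset.card_union_of_disjoint hdisj]; ring
    _ ≤ m * (vertexBoundary G S).card := Nat.mul_le_mul_left m (Finset.card_le_card hsub)

theorem vertexBoundary_map_subtype_subset {L : Set V} [Fintype L]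
    (hL : ∀ x ∈ L, ∀ y, G.Adj x y → y ∈ L) (T : Finset L) :
    vertexBoundary G (T.map (Function.Embedding.subtype _)) ⊆
      (vertexBoundary (G.induce L) T).map (Function.Embedding.subtype _) := by
  intro x hx
  obtain ⟨y, hxy, hxor⟩ := mem_vertexBoundary.1 hx
  have hmem (z : V) (hz : z ∈ L) :
      z ∈ T.map (Function.Embedding.subtype _) ↔ (⟨z, hz⟩ : L) ∈ T := by
    simp [hz]
  have hxL : x ∈ L := by
    by_contra hx
    have hyL : y ∉ L := fun hy => hx (hL y hy x hxy.symm)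
    exact hxor (by simp [hx, hyL])
  have hyL : y ∈ L := hL x hxL y hxy
  rw [hmem x hxL, hmem y hyL] at hxor
  exact Finset.mem_map.2 ⟨⟨x, hxL⟩, mem_vertexBoundary.2 ⟨⟨y, hyL⟩, hxy, hxor⟩, rfl⟩

theorem isVertexExpander_induce_reachable (hG : ∀ T, ¬IsBottleneck G m T) (v : V)
    [Fintype {w | G.Reachable v w}] :
    IsVertexExpander (G.induce {w | G.Reachable v w}) m := by
  intro T hT
  set S : Finset V := T.map (Function.Embedding.subtype _)
  have hcard : S.card = T.card := Finset.card_map _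
  have hT_ne : ∃ u, u ∉ T := by
    by_contra! huniv
    have : 0 < Fintype.card {w | G.Reachable v w} :=
      Fintype.card_pos_iff.2 ⟨⟨v, SimpleGraph.Reachable.refl _⟩⟩
    rw [Finset.eq_univ_of_forall huniv, Finset.card_univ] at hT
    omega
  have hexit : ∀ x ∈ S, ∃ y ∉ S, G.Reachable x y := by
    intro x hx
    obtain ⟨⟨u, hu⟩, huT⟩ := hT_ne
    obtain ⟨⟨x, hvx⟩, -, rfl⟩ := Finset.mem_map.1 hx
    exact ⟨u, by simpa [S] using fun _ => huT, hvx.symm.trans hu⟩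
  have hS : 2 * S.card ≤ Fintype.card V :=
    hcard ▸ hT.trans (Fintype.card_le_of_injective _ Subtype.val_injective)
  have hbound := (card_le_mul_card_vertexBoundary hG hS hexit).trans <|
    Nat.mul_le_mul_left m <| Finset.card_le_card <|
      vertexBoundary_map_subtype_subset (fun x hx y hxy => hx.trans hxy.reachable) T
  rw [hcard, Finset.card_map] at hbound
  exact_mod_cast hbound

theorem vsrwMixingTime_induce_reachable_le (hm : 1 ≤ m) (hG : ∀ T, ¬IsBottleneck G m T) (v : V)
    [Fintype {w | G.Reachable v w}] [DecidableEq {w | G.Reachable v w}] :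
    vsrwMixingTime (G.induce {w | G.Reachable v w}) ≤
      36 * m ^ 2 * (1 + Real.log (Fintype.card V) / 2) := by
  refine ((isVertexExpander_induce_reachable hG v).vsrwMixingTime_le
    (by exact_mod_cast hm)).trans ?_
  have hpos : 0 < Fintype.card {w | G.Reachable v w} :=
    Fintype.card_pos_iff.2 ⟨⟨v, SimpleGraph.Reachable.refl _⟩⟩
  have hcard : Fintype.card {w | G.Reachable v w} ≤ Fintype.card V :=
    Fintype.card_le_of_injective _ Subtype.val_injective
  gcongr

end Bottleneck

/-! ### Spanning forests -/

section Forest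

variable {V : Type*}

theorem exists_adj_dist_lt {H : SimpleGraph V} {x r : V} (hx : x ≠ r)
    (h : H.Reachable x r) : ∃ y, H.Adj x y ∧ H.dist y r < H.dist x r := by
  obtain ⟨p, hp⟩ := h.exists_walk_length_eq_dist
  cases p with
  | nil => exact absurd rfl hx
  | cons hadj q =>
    refine ⟨_, hadj, ?_⟩
    rw [← hp, SimpleGraph.Walk.length_cons, Nat.lt_succ_iff]
    exact SimpleGraph.dist_le q

theorem exists_root_parent (H : SimpleGraph V) :
    ∃ root parent : V → V, (∀ x, H.Reachable x (root x)) ∧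
      (∀ x y, H.Reachable x y → root x = root y) ∧
      (∀ x, x ≠ root x → H.Adj x (parent x)) ∧
      Set.InjOn (fun x => s(x, parent x)) {x | x ≠ root x} := by
  set root : V → V := fun x => (H.connectedComponentMk x).out
  have hroot (x : V) : H.Reachable x (root x) :=
    (SimpleGraph.ConnectedComponent.exact (Quot.out_eq (H.connectedComponentMk x))).symm
  have hroot_eq (x y : V) (h : H.Reachable x y) : root x = root y :=
    congrArg Quot.out (SimpleGraph.ConnectedComponent.sound h)
  have hcloser (x : V) : ∃ y, x ≠ root x →
      H.Adj x y ∧ H.dist y (root x) < H.dist x (root x) := by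
    by_cases hx : x = root x
    · exact ⟨x, fun h => absurd hx h⟩
    · exact (exists_adj_dist_lt hx (hroot x)).imp fun y hy _ => hy
  choose parent hparent using hcloser
  refine ⟨root, parent, hroot, hroot_eq, fun x hx => (hparent x hx).1, fun x hx y hy hxy => ?_⟩
  rcases Sym2.eq_iff.1 hxy with ⟨h, -⟩ | ⟨hxy, hyx⟩
  · exact h
  · obtain ⟨hadj, hlt⟩ := hparent x hx
    have hlt' := (hparent y hy).2
    rw [hyx, hroot_eq x y (hyx ▸ hadj.reachable)] at hlt
    rw [← hxy] at hlt'
    exact absurd hlt hlt'.not_gt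

/-- Every vertex of `K` has a parent in `S` along an edge of `G`, distinct vertices using distinct
edges. A spanning forest of `G[S]` with root set `S \ K` provides such parents; the cycles that the
definition still allows do no harm, as only the number of distinct edges matters. -/
def HasParentMap (G : SimpleGraph V) (K S : Finset V) : Prop :=
  ∃ parent : K → V, Function.Injective (fun v : K => s(v.1, parent v)) ∧
    ∀ v : K, parent v ∈ S ∧ G.Adj v (parent v)

theorem hasParentMap_empty (G : SimpleGraph V) (S : Finset V) : HasParentMap G ∅ S :=
  ⟨fun v => v, Function.injective_of_subsingleton _, fun v => absurd v.2 (Finset.notMem_empty _)⟩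

theorem exists_hasParentMap_of_le_card_innerComponent [Fintype V] [DecidableEq V]
    {G : SimpleGraph V} {S : Finset V} {m : ℕ} (hS : ∀ x ∈ S, m ≤ (innerComponent G S x).card) :
    ∃ R ⊆ S, m * R.card ≤ S.card ∧ HasParentMap G (S \ R) S := by
  obtain ⟨root, parent, hroot, hroot_eq, hadj, hinj⟩ := exists_root_parent (innerGraph G S)
  have hne (x : V) (hx : x ∈ S \ S.image root) : x ≠ root x := by
    obtain ⟨hxS, hx⟩ := Finset.mem_sdiff.1 hx
    exact fun h => hx (Finset.mem_image.2 ⟨x, hxS, h.symm⟩)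
  refine ⟨S.image root, ?_, ?_, fun x => parent x, ?_, fun x => ?_⟩
  · exact Finset.image_subset_iff.2 fun x hx => mem_of_innerGraph_reachable hx (hroot x)
  · refine Finset.mul_card_image_le_card _ _ fun r hr => ?_
    obtain ⟨x, hx, rfl⟩ := Finset.mem_image.1 hr
    refine (hS x hx).trans (Finset.card_le_card fun y hy => ?_)
    rw [mem_innerComponent] at hy
    exact Finset.mem_filter.2 ⟨mem_of_innerGraph_reachable hx hy, (hroot_eq x y hy).symm⟩
  · exact Set.injOn_iff_injective.1 (hinj.mono hne)
  · obtain ⟨h, -, hmem⟩ := innerGraph_adj.1 (hadj x (hne x x.2))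
    exact ⟨hmem, h⟩

end Forest

/-! ### Random graphs with independent edges -/

section IndependentEdges

/-- The potential edges of a simple graph on `V`. -/
def potentialEdges (V : Type*) [Fintype V] : Finset (Sym2 V) :=
  {e | ¬e.IsDiag}

theorem mem_potentialEdges {V : Type*} [Fintype V] {e : Sym2 V} :
    e ∈ potentialEdges V ↔ ¬e.IsDiag := by
  simp [potentialEdges]

theorem sum_prod_potentialEdges_ite {V : Type*} [Fintype V] [DecidableEq V] (f g : Sym2 V → ℝ) :
    ∑ G : SimpleGraph V, ∏ e ∈ potentialEdges V, (if e ∈ G.edgeSet then f e else g e) =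
      ∏ e ∈ potentialEdges V, (f e + g e) := by
  have hmem {G : SimpleGraph V} {e : Sym2 V} (he : e ∈ G.edgeSet) : e ∈ potentialEdges V :=
    mem_potentialEdges.2 (G.not_isDiag_of_mem_edgeSet he)
  rw [Finset.prod_add]
  refine Finset.sum_nbij' (fun G => {e ∈ potentialEdges V | e ∈ G.edgeSet})
    (fun t => SimpleGraph.fromEdgeSet (t : Set (Sym2 V)))
    (fun G _ => Finset.mem_powerset.2 (Finset.filter_subset _ _)) (fun t _ => Finset.mem_univ _)
    (fun G _ => ?_) (fun t ht => ?_) (fun G _ => ?_)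
  · have hcoe : (({e ∈ potentialEdges V | e ∈ G.edgeSet} : Finset _) : Set _) = G.edgeSet := by
      ext e
      simpa using hmem
    simp only [hcoe, SimpleGraph.fromEdgeSet_edgeSet]
  · ext e
    simp only [SimpleGraph.edgeSet_fromEdgeSet, Finset.mem_filter, Set.mem_sdiff, Finset.mem_coe,
      Sym2.mem_diagSet, mem_potentialEdges]
    exact ⟨fun h => h.2.1, fun h =>
      have he := mem_potentialEdges.1 (Finset.mem_powerset.1 ht h); ⟨he, h, he⟩⟩
  · rw [Finset.prod_ite, Finset.filter_not]

variable {N : ℕ} {p : ℕ → ℕ → ℝ}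

/-- The presence probability of an edge of the random graph on `Fin N`. -/
def edgeProb (p : ℕ → ℕ → ℝ) (e : Sym2 (Fin N)) : ℝ :=
  p (e.inf + 1) (e.sup + 1)

theorem graphWeight_eq_prod_potentialEdges (p : ℕ → ℕ → ℝ) (G : SimpleGraph (Fin N)) :
    graphWeight p N G = ∏ e ∈ potentialEdges (Fin N),
      if e ∈ G.edgeSet then edgeProb p e else 1 - edgeProb p e := by
  rw [graphWeight, ← Fintype.prod_prod_type', ← Finset.prod_filter]
  refine Finset.prod_nbij' (fun x => s(x.1, x.2)) (fun e => (e.inf, e.sup))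
    (fun x hx => ?_) (fun e he => ?_) (fun x hx => ?_) (fun e _ => ?_) (fun x hx => ?_)
  · exact mem_potentialEdges.2 (Finset.mem_filter.1 hx).2.ne
  · induction e with
    | _ i j =>
      rw [mem_potentialEdges, Sym2.mk_isDiag_iff] at he
      simpa [eq_comm] using he
  · have hlt : x.1 < x.2 := (Finset.mem_filter.1 hx).2
    simp [hlt.le]
  · induction e with
    | _ i j => rcases le_total i j with h | h <;> simp [h, Sym2.eq_swap]
  · have hlt : x.1 < x.2 := (Finset.mem_filter.1 hx).2
    simp [edgeProb, hlt.le]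

theorem graphProb_edges_present_absent (p : ℕ → ℕ → ℝ) {A B : Finset (Sym2 (Fin N))}
    (hA : A ⊆ potentialEdges (Fin N)) (hB : B ⊆ potentialEdges (Fin N)) (hAB : Disjoint A B) :
    graphProb p N (fun G => (∀ e ∈ A, e ∈ G.edgeSet) ∧ ∀ e ∈ B, e ∉ G.edgeSet) =
      (∏ e ∈ A, edgeProb p e) * ∏ e ∈ B, (1 - edgeProb p e) := by
  let f (e : Sym2 (Fin N)) : ℝ := if e ∈ B then 0 else edgeProb p e
  let g (e : Sym2 (Fin N)) : ℝ := if e ∈ A then 0 else 1 - edgeProb p e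
  have hfg (e : Sym2 (Fin N)) : f e + g e =
      (if e ∈ A then edgeProb p e else 1) * if e ∈ B then 1 - edgeProb p e else 1 := by
    by_cases heA : e ∈ A
    · simp [f, g, heA, Finset.disjoint_left.1 hAB heA]
    · by_cases heB : e ∈ B <;> simp [f, g, heA, heB]
  calc
    _ = ∑ G : SimpleGraph (Fin N), ∏ e ∈ potentialEdges (Fin N),
        if e ∈ G.edgeSet then f e else g e := by
      refine Finset.sum_congr rfl fun G _ => ?_
      split_ifs with h
      · rw [graphWeight_eq_prod_potentialEdges]
        refine Finset.prod_congr rfl fun e _ => ?_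
        split_ifs with he
        · exact (if_neg fun heB => h.2 e heB he).symm
        · exact (if_neg fun heA => he (h.1 e heA)).symm
      · rw [eq_comm, Finset.prod_eq_zero_iff]
        rw [not_and_or] at h
        push Not at h
        rcases h with ⟨e, heA, he⟩ | ⟨e, heB, he⟩
        · exact ⟨e, hA heA, (if_neg he).trans (if_pos heA)⟩
        · exact ⟨e, hB heB, (if_pos he).trans (if_pos heB)⟩
    _ = _ := by
      simp only [sum_prod_potentialEdges_ite, hfg, Finset.prod_mul_distrib, Finset.prod_ite_mem,
        Finset.inter_eq_right.2 hA, Finset.inter_eq_right.2 hB]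

theorem graphProb_true (p : ℕ → ℕ → ℝ) : graphProb p N (fun _ => True) = 1 := by
  simpa using graphProb_edges_present_absent (A := ∅) (B := ∅) p (Finset.empty_subset _)
    (Finset.empty_subset _) (Finset.disjoint_empty_left _)

theorem graphProb_not (p : ℕ → ℕ → ℝ) (A : SimpleGraph (Fin N) → Prop) :
    graphProb p N (fun G => ¬A G) = 1 - graphProb p N A := by
  rw [← graphProb_true (N := N) p, graphProb, graphProb, graphProb, ← Finset.sum_sub_distrib]
  refine Finset.sum_congr rfl fun G _ => ?_
  by_cases h : A G <;> simp [h]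

variable (hp : ∀ i j : Fin N, p (i + 1) (j + 1) ∈ Set.Icc (0 : ℝ) 1)
include hp

theorem graphWeight_nonneg (G : SimpleGraph (Fin N)) : 0 ≤ graphWeight p N G := by
  refine Finset.prod_nonneg fun i _ => Finset.prod_nonneg fun j _ => ?_
  have h := hp i j
  split_ifs
  · exact h.1
  · exact sub_nonneg.2 h.2
  · exact zero_le_one

theorem graphProb_mono {A B : SimpleGraph (Fin N) → Prop} (hAB : ∀ G, A G → B G) :
    graphProb p N A ≤ graphProb p N B := by
  refine Finset.sum_le_sum fun G _ => ?_
  have h := graphWeight_nonneg hp G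
  split_ifs with hA hB hB
  · exact le_rfl
  · exact absurd (hAB G hA) hB
  · exact h
  · exact le_rfl

theorem graphProb_nonneg (A : SimpleGraph (Fin N) → Prop) : 0 ≤ graphProb p N A :=
  Finset.sum_nonneg fun G _ => by
    split_ifs
    exacts [graphWeight_nonneg hp G, le_rfl]

theorem graphProb_le_one (A : SimpleGraph (Fin N) → Prop) : graphProb p N A ≤ 1 :=
  (graphProb_mono hp fun _ _ => trivial).trans (graphProb_true p).le

theorem graphProb_or_le (A B : SimpleGraph (Fin N) → Prop) :
    graphProb p N (fun G => A G ∨ B G) ≤ graphProb p N A + graphProb p N B := by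
  simp only [graphProb, ← Finset.sum_add_distrib]
  refine Finset.sum_le_sum fun G _ => ?_
  have h := graphWeight_nonneg hp G
  by_cases hA : A G <;> by_cases hB : B G <;> simp [hA, hB, h]

theorem graphProb_exists_le_sum {ι : Type*} (s : Finset ι) (A : ι → SimpleGraph (Fin N) → Prop) :
    graphProb p N (fun G => ∃ i ∈ s, A i G) ≤ ∑ i ∈ s, graphProb p N (A i) := by
  simp only [graphProb]
  rw [Finset.sum_comm]
  refine Finset.sum_le_sum fun G _ => ?_
  have hterm (i : ι) : 0 ≤ if A i G then graphWeight p N G else 0 := by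
    split_ifs
    exacts [graphWeight_nonneg hp G, le_rfl]
  split_ifs with h
  · obtain ⟨i, hi, hA⟩ := h
    simpa only [if_pos hA] using Finset.single_le_sum (fun i _ => hterm i) hi
  · exact Finset.sum_nonneg fun i _ => hterm i

end IndependentEdges

theorem tendsto_graphProb_one_of_tendsto_graphProb_not_zero {p : ℕ → ℕ → ℕ → ℝ}
    {A : ∀ N, SimpleGraph (Fin N) → Prop}
    (h : Tendsto (fun N => graphProb (p N) N fun G => ¬A N G) atTop (nhds 0)) :
    Tendsto (fun N => graphProb (p N) N (A N)) atTop (nhds 1) := by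
  simpa [graphProb_not] using h.const_sub 1

theorem tendsto_graphProb_one_mono {p : ℕ → ℕ → ℕ → ℝ} {A B : ∀ N, SimpleGraph (Fin N) → Prop}
    (hp : ∀ N, ∀ i j : Fin N, p N (i + 1) (j + 1) ∈ Set.Icc (0 : ℝ) 1)
    (hA : Tendsto (fun N => graphProb (p N) N (A N)) atTop (nhds 1))
    (hAB : ∀ᶠ N in atTop, ∀ G, A N G → B N G) :
    Tendsto (fun N => graphProb (p N) N (B N)) atTop (nhds 1) :=
  tendsto_of_tendsto_of_tendsto_of_le_of_le' hA tendsto_const_nhds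
    (hAB.mono fun N => graphProb_mono (hp N)) (.of_forall fun N => graphProb_le_one (hp N) _)

/-! ### Forests in Norros–Reittu graphs -/

theorem injOn_sym2Mk_product {V : Type*} {S U : Finset V} (hSU : Disjoint S U) :
    Set.InjOn (fun x : V × V => s(x.1, x.2)) (S ×ˢ U : Finset (V × V)) := by
  intro x hx y hy hxy
  rcases Sym2.eq_iff.1 hxy with ⟨h₁, h₂⟩ | ⟨h, -⟩
  · exact Prod.ext h₁ h₂
  · exact absurd (h ▸ (Finset.mem_product.1 hx).1)
      (Finset.disjoint_right.1 hSU (Finset.mem_product.1 hy).2)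

section NorrosReittu

variable {N : ℕ} {p : ℕ → ℕ → ℝ} {c : ℝ} {W : Fin N → ℝ}

/-- The edge probabilities `p` are those of the Norros–Reittu graph with vertex weights `W`, in
which `i` and `j` are adjacent unless a Poisson variable of mean `c * W i * W j` vanishes. As for
`graphProb`, the arguments of `p` are 1-based. -/
def IsNorrosReittu (p : ℕ → ℕ → ℝ) (c : ℝ) (W : Fin N → ℝ) : Prop :=
  ∀ i j : Fin N, p (i + 1) (j + 1) = 1 - Real.exp (-(c * W i * W j))

namespace IsNorrosReittu

variable (hp : IsNorrosReittu p c W)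
include hp

theorem edgeProb_mk (i j : Fin N) : edgeProb p s(i, j) = 1 - Real.exp (-(c * W i * W j)) := by
  rw [edgeProb, hp]
  rcases le_total i j with h | h
  · simp [h]
  · simp [h, mul_right_comm c (W i) (W j)]

theorem edgeProb_mk_le (i j : Fin N) : edgeProb p s(i, j) ≤ c * W i * W j := by
  rw [hp.edgeProb_mk]
  linarith [Real.add_one_le_exp (-(c * W i * W j))]

theorem edgeProb_mk_nonneg (hc : 0 ≤ c) (hW : ∀ i, 0 ≤ W i) (i j : Fin N) :
    0 ≤ edgeProb p s(i, j) := by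
  rw [hp.edgeProb_mk, sub_nonneg, Real.exp_le_one_iff, neg_nonpos]
  exact mul_nonneg (mul_nonneg hc (hW i)) (hW j)

theorem mem_Icc (hc : 0 ≤ c) (hW : ∀ i, 0 ≤ W i) (i j : Fin N) :
    p (i + 1) (j + 1) ∈ Set.Icc (0 : ℝ) 1 := by
  have hexp : Real.exp (-(c * W i * W j)) ≤ 1 :=
    Real.exp_le_one_iff.2 (neg_nonpos.2 (mul_nonneg (mul_nonneg hc (hW i)) (hW j)))
  rw [hp]
  exact ⟨sub_nonneg.2 hexp, sub_le_self _ (Real.exp_nonneg _)⟩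

theorem prod_one_sub_edgeProb (S U : Finset (Fin N)) :
    ∏ x ∈ S ×ˢ U, (1 - edgeProb p s(x.1, x.2)) =
      Real.exp (-(c * (∑ x ∈ S, W x) * ∑ y ∈ U, W y)) := by
  simp only [hp.edgeProb_mk, sub_sub_cancel]
  rw [← Real.exp_sum, Finset.sum_neg_distrib, Finset.sum_product, mul_assoc,
    Finset.sum_mul_sum, Finset.mul_sum]
  simp only [Finset.mul_sum, mul_assoc]

theorem graphProb_parent_adj_not_adj_le {S U K : Finset (Fin N)} (hc : 0 ≤ c) (hW : ∀ i, 0 ≤ W i)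
    (hSU : Disjoint S U) (hK : K ⊆ S) {parent : K → Fin N} (hparent : ∀ v, parent v ∈ S)
    (hinj : Function.Injective fun v : K => s(v.1, parent v)) (hloop : ∀ v : K, v.1 ≠ parent v) :
    graphProb p N (fun G => (∀ v : K, G.Adj v (parent v)) ∧ ∀ x ∈ S, ∀ y ∈ U, ¬G.Adj x y) ≤
      (∏ v : K, c * W v * W (parent v)) *
        Real.exp (-(c * (∑ x ∈ S, W x) * ∑ y ∈ U, W y)) := by
  have hne {x y : Fin N} (hx : x ∈ S) (hy : y ∈ U) : x ≠ y :=
    fun h => Finset.disjoint_left.1 hSU hx (h ▸ hy)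
  set A := Finset.univ.image fun v : K => s(v.1, parent v)
  set B := (S ×ˢ U).image fun x => s(x.1, x.2)
  have hA : A ⊆ potentialEdges (Fin N) := by
    simpa [A, Finset.image_subset_iff, mem_potentialEdges] using hloop
  have hB : B ⊆ potentialEdges (Fin N) := by
    simpa [B, Finset.image_subset_iff, mem_potentialEdges] using fun x y hx hy => hne hx hy
  have hAB : Disjoint A B := by
    simp only [A, B, Finset.disjoint_left, Finset.mem_image, Finset.mem_product]
    rintro _ ⟨v, -, rfl⟩ ⟨x, hx, hxv⟩
    rcases Sym2.eq_iff.1 hxv with ⟨-, h⟩ | ⟨-, h⟩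
    · exact hne (hparent v) hx.2 h.symm
    · exact hne (hK v.2) hx.2 h.symm
  calc
    _ = graphProb p N fun G => (∀ e ∈ A, e ∈ G.edgeSet) ∧ ∀ e ∈ B, e ∉ G.edgeSet := by
      congr! 2 with G
      simp only [A, B, Finset.forall_mem_image, Finset.mem_univ, forall_const, Finset.mem_product,
        Prod.forall, and_imp, SimpleGraph.mem_edgeSet]
      tauto
    _ = (∏ v : K, edgeProb p s(v.1, parent v)) * ∏ x ∈ S ×ˢ U, (1 - edgeProb p s(x.1, x.2)) := by
      rw [graphProb_edges_present_absent p hA hB hAB, Finset.prod_image hinj.injOn,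
        Finset.prod_image (injOn_sym2Mk_product hSU)]
    _ ≤ _ := by
      rw [hp.prod_one_sub_edgeProb]
      gcongr with v
      · exact fun v _ => hp.edgeProb_mk_nonneg hc hW v.1 (parent v)
      · exact hp.edgeProb_mk_le _ _

theorem graphProb_hasParentMap_not_adj_le {S U K : Finset (Fin N)} (hc : 0 ≤ c)
    (hW : ∀ i, 0 ≤ W i) (hSU : Disjoint S U) (hK : K ⊆ S) :
    graphProb p N (fun G => HasParentMap G K S ∧ ∀ x ∈ S, ∀ y ∈ U, ¬G.Adj x y) ≤
      (∏ v ∈ K, c * W v * ∑ x ∈ S, W x) * Real.exp (-(c * (∑ x ∈ S, W x) * ∑ y ∈ U, W y)) := by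
  set I := {parent ∈ Fintype.piFinset fun _ : K => S |
    Function.Injective (fun v : K => s(v.1, parent v)) ∧ ∀ v : K, v.1 ≠ parent v}
  calc
    _ ≤ graphProb p N fun G => ∃ parent ∈ I,
        (∀ v : K, G.Adj v (parent v)) ∧ ∀ x ∈ S, ∀ y ∈ U, ¬G.Adj x y := by
      refine graphProb_mono (hp.mem_Icc hc hW) fun G ⟨⟨parent, hinj, hparent⟩, hSU⟩ => ?_
      exact ⟨parent, Finset.mem_filter.2 ⟨Fintype.mem_piFinset.2 fun v => (hparent v).1, hinj,
        fun v => (hparent v).2.ne⟩, fun v => (hparent v).2, hSU⟩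
    _ ≤ ∑ parent ∈ I, (∏ v : K, c * W v * W (parent v)) *
        Real.exp (-(c * (∑ x ∈ S, W x) * ∑ y ∈ U, W y)) := by
      refine (graphProb_exists_le_sum (hp.mem_Icc hc hW) _ _).trans <|
        Finset.sum_le_sum fun parent hparent => ?_
      obtain ⟨hparent, hinj, hloop⟩ := Finset.mem_filter.1 hparent
      exact hp.graphProb_parent_adj_not_adj_le hc hW hSU hK (Fintype.mem_piFinset.1 hparent) hinj
        hloop
    _ ≤ (∑ parent ∈ Fintype.piFinset fun _ : K => S, ∏ v : K, c * W v * W (parent v)) *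
        Real.exp (-(c * (∑ x ∈ S, W x) * ∑ y ∈ U, W y)) := by
      rw [← Finset.sum_mul]
      gcongr
      · exact fun parent _ _ => Finset.prod_nonneg fun v _ =>
          mul_nonneg (mul_nonneg hc (hW _)) (hW _)
      · exact Finset.filter_subset _ _
    _ = _ := by
      rw [← Finset.prod_univ_sum (fun _ : K => S) fun v x => c * W v * W x]
      simp only [← Finset.mul_sum]
      rw [Finset.prod_coe_sort K fun v => c * W v * ∑ x ∈ S, W x]

end IsNorrosReittu

end NorrosReittu

/-! ### Elementary estimates -/

section Estimates

theorem sum_inv_card_pow_card_le (V : Type*) [Fintype V] :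
    ∑ T : Finset V, ((Fintype.card V : ℝ)⁻¹) ^ T.card ≤ Real.exp 1 := by
  have hsum := Fintype.sum_pow_mul_eq_add_pow V ((Fintype.card V : ℝ)⁻¹) 1
  simp only [one_pow, mul_one] at hsum
  rw [hsum, add_comm]
  exact Real.one_add_inv_pow_le_exp

theorem sum_factorial_div_card_pow_le (V : Type*) [Fintype V] :
    ∑ K : Finset V, (K.card.factorial : ℝ) / (Fintype.card V : ℝ) ^ K.card ≤
      Fintype.card V + 1 := by
  set n := Fintype.card V
  have hterm (k : ℕ) : n.choose k • ((k.factorial : ℝ) / (n : ℝ) ^ k) ≤ 1 := by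
    rw [nsmul_eq_mul, ← mul_div_assoc]
    refine div_le_one_of_le₀ ?_ (by positivity)
    exact (le_div_iff₀ (by positivity)).1 (Nat.choose_le_pow_div k n)
  calc
    _ = ∑ k ∈ Finset.range (n + 1), n.choose k • ((k.factorial : ℝ) / (n : ℝ) ^ k) := by
      rw [← Finset.powerset_univ,
        Finset.sum_powerset_apply_card fun k => (k.factorial : ℝ) / (n : ℝ) ^ k, Finset.card_univ]
    _ ≤ ∑ _k ∈ Finset.range (n + 1), (1 : ℝ) := Finset.sum_le_sum fun _ _ => hterm _
    _ = n + 1 := by simp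

theorem prod_mul_mul_exp_le {ι : Type*} {K : Finset ι} {W : ι → ℝ} (hW : ∀ v ∈ K, 1 ≤ W v)
    {w : ℝ} (hw : ∑ v ∈ K, W v ≤ w) {a : ℝ} (ha : 1 ≤ a) :
    (∏ v ∈ K, W v * w) * Real.exp (-((1 + a) * w)) ≤
      K.card.factorial * Real.exp (-a) ^ K.card := by
  have hW₀ (v : ι) (hv : v ∈ K) : 0 ≤ W v := zero_le_one.trans (hW v hv)
  have hw₀ : 0 ≤ w := (Finset.sum_nonneg hW₀).trans hw
  have hpow : w ^ K.card ≤ K.card.factorial * Real.exp w := by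
    rw [← div_le_iff₀' (by positivity)]
    exact Real.pow_div_factorial_le_exp w hw₀ K.card
  have hfactor (v : ι) (hv : v ∈ K) : W v * Real.exp (-(a * W v)) ≤ Real.exp (-a) := by
    have hle : W v ≤ Real.exp (a * (W v - 1)) := by
      nlinarith [Real.add_one_le_exp (a * (W v - 1)), hW v hv]
    calc W v * Real.exp (-(a * W v)) ≤ Real.exp (a * (W v - 1)) * Real.exp (-(a * W v)) := by gcongr
      _ = Real.exp (-a) := by rw [← Real.exp_add]; ring_nf
  have hprod : 0 ≤ ∏ v ∈ K, W v := Finset.prod_nonneg hW₀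
  calc
    _ = (∏ v ∈ K, W v) * (w ^ K.card * Real.exp (-((1 + a) * w))) := by
      rw [Finset.prod_mul_distrib, Finset.prod_const, mul_assoc]
    _ ≤ (∏ v ∈ K, W v) * (K.card.factorial * Real.exp w * Real.exp (-((1 + a) * w))) := by gcongr
    _ = (∏ v ∈ K, W v) * (K.card.factorial * Real.exp (-(a * w))) := by
      rw [mul_assoc (K.card.factorial : ℝ), ← Real.exp_add]; ring_nf
    _ ≤ (∏ v ∈ K, W v) * (K.card.factorial * Real.exp (-(a * ∑ v ∈ K, W v))) := by gcongr
    _ = K.card.factorial * ∏ v ∈ K, W v * Real.exp (-(a * W v)) := by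
      rw [Finset.mul_sum, ← Finset.sum_neg_distrib, Real.exp_sum, Finset.prod_mul_distrib]; ring
    _ ≤ K.card.factorial * ∏ _v ∈ K, Real.exp (-a) := by
      gcongr with _ hv
      · exact fun v hv => mul_nonneg (hW₀ v hv) (Real.exp_nonneg _)
      · exact hfactor _ hv
    _ = _ := by rw [Finset.prod_const]

theorem three_mul_exp_neg_le : 3 * Real.exp (-1.1) ≤ Real.exp (-(1 / 1000)) := by
  rw [← Real.exp_log (zero_lt_three (α := ℝ)), ← Real.exp_add, Real.exp_le_exp]
  linarith [Real.log_three_lt_d9]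

theorem exp_neg_div_le_inv_pow {N s t m : ℕ} (hN₀ : 0 < N) (hN : (N : ℝ) ≤ Real.exp (m / 5000))
    (ht : m * t ≤ s) : Real.exp (-(s / 5000)) ≤ (N : ℝ)⁻¹ ^ t := by
  rw [Real.exp_neg, inv_pow]
  refine inv_anti₀ (by positivity) ?_
  calc (N : ℝ) ^ t ≤ Real.exp (m / 5000) ^ t := by gcongr
    _ = Real.exp ((m * t : ℕ) / 5000) := by rw [← Real.exp_nat_mul]; push_cast; ring_nf
    _ ≤ Real.exp (s / 5000) := by gcongr

theorem exp_neg_pow_le_inv_pow {N k r t m : ℕ} (hN₀ : 0 < N) (hN : (N : ℝ) ≤ Real.exp (m / 5000))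
    (hm : 1000 ≤ m) (hkr : m ≤ k + r) (hr : m * r ≤ k + r) (ht : m * t ≤ k + r) :
    Real.exp (-(1 / 1000)) ^ k ≤ (N : ℝ)⁻¹ ^ (r + (t + 2)) := by
  have hr' : 1000 * r ≤ k + r := (Nat.mul_le_mul_right r hm).trans hr
  have hexponent : m * (r + (t + 2)) ≤ 5 * k := by nlinarith
  calc Real.exp (-(1 / 1000)) ^ k = Real.exp (-((5 * k : ℕ) / 5000)) := by
        rw [← Real.exp_nat_mul]; push_cast; ring_nf
    _ ≤ _ := exp_neg_div_le_inv_pow hN₀ hN hexponent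

theorem log_twentyFive_div_nine_le : Real.log (25 / 9) ≤ 1.0217 := by
  rw [show (25 / 9 : ℝ) = (5 / 3) ^ 2 by norm_num, Real.log_pow,
    Real.log_div (by norm_num) (by norm_num)]
  push_cast
  linarith [Real.log_five_lt_d9, Real.log_three_gt_d9]

theorem log_twentyFive_div_sixteen_le : Real.log (25 / 16) ≤ 0.4463 := by
  rw [show (25 / 16 : ℝ) = (5 / 2 ^ 2) ^ 2 by norm_num, Real.log_pow,
    Real.log_div (by norm_num) (by norm_num), Real.log_pow]
  push_cast
  linarith [Real.log_five_lt_d9, Real.log_two_gt_d9]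

-- The logarithms are those of `(9 / 25)⁻¹` and `(16 / 25)⁻¹`: a set of `s` out of `n` points has
-- binomial probability `(9 / 25) ^ s * (16 / 25) ^ (n - s)`, which makes the sum over all sets one.
theorem cross_entropy_add_le {s t n : ℝ} (hn : 0 < n) (hs : 29 / 100 * n ≤ s) (hs' : s ≤ n / 2)
    (ht : 1000 * t ≤ s) :
    s * Real.log (25 / 9) + (n - s) * Real.log (25 / 16) + (s / 5000 + n / 500) ≤
      3 / n * s * (n - s - t) := by
  have hquad : (s * 1.0217 + (n - s) * 0.4463 + n / 250) * n ≤ 3 * s * (n - s) := by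
    nlinarith [mul_nonneg (sub_nonneg.2 hs) (sub_nonneg.2 hs')]
  have hst : 3 * s * t ≤ (3 / 2000 * s) * n := by nlinarith
  have hn' : (s / 5000 + 3 / 2000 * s + n / 500) * n ≤ n / 250 * n := by gcongr; linarith
  calc
    _ ≤ s * 1.0217 + (n - s) * 0.4463 + (s / 5000 + n / 500) := by
      gcongr
      · linarith
      · exact log_twentyFive_div_nine_le
      · linarith
      · exact log_twentyFive_div_sixteen_le
    _ ≤ 3 * s * (n - s - t) / n := by
      rw [le_div_iff₀ hn]
      linarith
    _ = _ := by ring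

end Estimates

/-! ### Bottlenecks are unlikely -/

section BottleneckProbability

theorem IsBottleneck.le_card {V : Type*} [Fintype V] {G : SimpleGraph V} {m : ℕ} {S : Finset V}
    (hS : IsBottleneck G m S) : m ≤ S.card := by
  obtain ⟨x, hx⟩ := hS.nonempty
  refine (hS.le_card_innerComponent x hx).trans (Finset.card_le_card fun y hy => ?_)
  exact mem_of_innerGraph_reachable hx (mem_innerComponent.1 hy)

theorem not_adj_of_mem_compl_union_outerBoundary {V : Type*} [Fintype V] [DecidableEq V]
    {G : SimpleGraph V} {S : Finset V} {x y : V} (hx : x ∈ S)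
    (hy : y ∈ (S ∪ outerBoundary G S)ᶜ) : ¬G.Adj x y := by
  rw [Finset.mem_compl, Finset.mem_union, not_or] at hy
  exact fun hxy => hy.2 (mem_outerBoundary.2 ⟨hy.1, x, hx, hxy⟩)

variable {N m : ℕ} {p : ℕ → ℕ → ℝ} {W : Fin N → ℝ}

/-- The event that `T` separates `S` from the rest of the graph, and that every vertex of `K` has a
parent in `S`. -/
def SeparatedForest (K S T : Finset (Fin N)) (G : SimpleGraph (Fin N)) : Prop :=
  HasParentMap G K S ∧ ∀ x ∈ S, ∀ y ∈ (S ∪ T)ᶜ, ¬G.Adj x y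

theorem card_le_sum_of_one_le {ι : Type*} {S : Finset ι} {f : ι → ℝ} (hf : ∀ x ∈ S, 1 ≤ f x) :
    (S.card : ℝ) ≤ ∑ x ∈ S, f x := by
  simpa using Finset.card_nsmul_le_sum S f 1 hf

namespace IsNorrosReittu

variable (hp : IsNorrosReittu p (3 / N) W) (hW : ∀ i, 1 ≤ W i)
include hp hW

theorem graphProb_separatedForest_le {K S T : Finset (Fin N)} (hK : K ⊆ S) :
    graphProb p N (SeparatedForest K S T) ≤ (∏ v ∈ K, 3 / N * W v * ∑ x ∈ S, W x) *
      Real.exp (-(3 / N * (∑ x ∈ S, W x) * (S ∪ T)ᶜ.card)) := by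
  have hW₀ (i : Fin N) : 0 ≤ W i := zero_le_one.trans (hW i)
  have hw : 0 ≤ ∑ x ∈ S, W x := Finset.sum_nonneg fun x _ => hW₀ x
  have hSU : Disjoint S (S ∪ T)ᶜ := disjoint_compl_right.mono_left Finset.subset_union_left
  refine (hp.graphProb_hasParentMap_not_adj_le (by positivity) hW₀ hSU hK).trans ?_
  have hprod : 0 ≤ ∏ v ∈ K, 3 / N * W v * ∑ x ∈ S, W x :=
    Finset.prod_nonneg fun v _ => mul_nonneg (mul_nonneg (by positivity) (hW₀ v)) hw
  gcongr
  exact card_le_sum_of_one_le fun x _ => hW x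

theorem graphProb_separatedForest_le_of_card_le {K S T : Finset (Fin N)} (hK : K ⊆ S)
    (hN : 0 < N) (hU : 7 * N ≤ 10 * (S ∪ T)ᶜ.card) :
    graphProb p N (SeparatedForest K S T) ≤
      K.card.factorial / (N : ℝ) ^ K.card * Real.exp (-(1 / 1000)) ^ K.card := by
  set w := ∑ x ∈ S, W x
  have hW₀ (i : Fin N) : 0 ≤ W i := zero_le_one.trans (hW i)
  have hw : 0 ≤ w := Finset.sum_nonneg fun x _ => hW₀ x
  have hKw : ∑ v ∈ K, W v ≤ w := Finset.sum_le_sum_of_subset_of_nonneg hK fun x _ _ => hW₀ x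
  have hprod : 0 ≤ ∏ v ∈ K, W v * w := Finset.prod_nonneg fun v _ => mul_nonneg (hW₀ v) hw
  have hexponent : (1 + 1.1) * w ≤ 3 / N * w * (S ∪ T)ᶜ.card := by
    have hU' : (7 : ℝ) * N ≤ 10 * (S ∪ T)ᶜ.card := mod_cast hU
    rw [div_mul_eq_mul_div, div_mul_eq_mul_div, le_div_iff₀ (by positivity)]
    nlinarith
  calc
    _ ≤ (∏ v ∈ K, 3 / N * (W v * w)) * Real.exp (-(3 / N * w * (S ∪ T)ᶜ.card)) := by
      simpa only [mul_assoc] using hp.graphProb_separatedForest_le hW (T := T) hK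
    _ = (3 / N) ^ K.card *
        ((∏ v ∈ K, W v * w) * Real.exp (-(3 / N * w * (S ∪ T)ᶜ.card))) := by
      rw [Finset.prod_mul_distrib, Finset.prod_const, mul_assoc]
    _ ≤ (3 / N) ^ K.card * ((∏ v ∈ K, W v * w) * Real.exp (-((1 + 1.1) * w))) := by gcongr
    _ ≤ (3 / N) ^ K.card * (K.card.factorial * Real.exp (-1.1) ^ K.card) := by
      refine mul_le_mul_of_nonneg_left ?_ (by positivity)
      exact prod_mul_mul_exp_le (fun v _ => hW v) hKw (a := 1.1) (by norm_num)
    _ = K.card.factorial / (N : ℝ) ^ K.card * (3 * Real.exp (-1.1)) ^ K.card := by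
      rw [div_pow, mul_pow]; ring
    _ ≤ _ := by
      gcongr
      exact three_mul_exp_neg_le

variable (hN : 0 < N) (hm : 1000 ≤ m) (hNm : (N : ℝ) ≤ Real.exp (m / 5000))
include hN hm hNm

theorem graphProb_separatedForest_le_of_small {K R T : Finset (Fin N)} (hKR : Disjoint K R)
    (hS : m ≤ (K ∪ R).card) (hR : m * R.card ≤ (K ∪ R).card) (hT : m * T.card ≤ (K ∪ R).card)
    (hsmall : 100 * (K ∪ R).card ≤ 29 * N) :
    graphProb p N (SeparatedForest K (K ∪ R) T) ≤ K.card.factorial / (N : ℝ) ^ K.card *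
      ((N : ℝ)⁻¹ ^ R.card * ((N : ℝ)⁻¹ ^ T.card * (N : ℝ)⁻¹ ^ 2)) := by
  have hT' : 1000 * T.card ≤ (K ∪ R).card := (Nat.mul_le_mul_right _ hm).trans hT
  have hU : 7 * N ≤ 10 * (K ∪ R ∪ T)ᶜ.card := by
    have hunion := Finset.card_union_le (K ∪ R) T
    rw [Finset.card_compl, Fintype.card_fin]
    omega
  refine (hp.graphProb_separatedForest_le_of_card_le hW Finset.subset_union_left hN hU).trans ?_
  rw [Finset.card_union_of_disjoint hKR] at hS hR hT
  rw [← pow_add, ← pow_add]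
  gcongr
  exact exp_neg_pow_le_inv_pow hN hNm hm hS hR hT

theorem graphProb_separatedForest_le_of_large {S T : Finset (Fin N)} (hST : Disjoint S T)
    (hT : m * T.card ≤ S.card) (hlarge : 29 * N ≤ 100 * S.card) (hhalf : 2 * S.card ≤ N) :
    graphProb p N (SeparatedForest ∅ S T) ≤
      (9 / 25) ^ S.card * (16 / 25) ^ (N - S.card) *
        ((N : ℝ)⁻¹ ^ T.card * Real.exp (-(N / 500))) := by
  have hU : ((S ∪ T)ᶜ.card : ℝ) = N - S.card - T.card := by
    have hcard := Finset.card_compl_add_card (S ∪ T)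
    rw [Finset.card_union_of_disjoint hST, Fintype.card_fin] at hcard
    rw [sub_sub, eq_sub_iff_add_eq]
    exact_mod_cast hcard
  have hinv : Real.exp (-(S.card / 5000)) ≤ (N : ℝ)⁻¹ ^ T.card :=
    exp_neg_div_le_inv_pow hN hNm hT
  have hexponent : S.card * Real.log (25 / 9) + (N - S.card : ℕ) * Real.log (25 / 16) +
      (S.card / 5000 + N / 500) ≤ 3 / N * (∑ x ∈ S, W x) * (S ∪ T)ᶜ.card := by
    have hcard : (S.card : ℝ) ≤ ∑ x ∈ S, W x := card_le_sum_of_one_le fun x _ => hW x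
    refine le_trans ?_ (show 3 / N * S.card * ((S ∪ T)ᶜ.card : ℝ) ≤ _ by gcongr)
    rw [hU, Nat.cast_sub (by omega)]
    refine cross_entropy_add_le (by positivity) ?_ ?_ ?_
    · have : (29 : ℝ) * N ≤ 100 * S.card := mod_cast hlarge
      linarith
    · have : (2 : ℝ) * S.card ≤ N := mod_cast hhalf
      linarith
    · exact_mod_cast (Nat.mul_le_mul_right T.card hm).trans hT
  have hpow (x : ℝ) (hx : 0 < x) (k : ℕ) : Real.exp (-(k * Real.log x)) = x⁻¹ ^ k := by
    rw [← mul_neg, Real.exp_nat_mul, Real.exp_neg, Real.exp_log hx]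
  calc
    _ ≤ Real.exp (-(3 / N * (∑ x ∈ S, W x) * (S ∪ T)ᶜ.card)) := by
      simpa using hp.graphProb_separatedForest_le hW (T := T) (Finset.empty_subset S)
    _ ≤ Real.exp (-(S.card * Real.log (25 / 9) + (N - S.card : ℕ) * Real.log (25 / 16) +
        (S.card / 5000 + N / 500))) := by gcongr
    _ = (9 / 25) ^ S.card * (16 / 25) ^ (N - S.card) *
        (Real.exp (-(S.card / 5000)) * Real.exp (-(N / 500))) := by
      simp only [neg_add, Real.exp_add]
      rw [hpow _ (by norm_num), hpow _ (by norm_num), inv_div, inv_div]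
    _ ≤ _ := by gcongr

theorem graphProb_exists_small_bottleneck_le :
    graphProb p N (fun G => ∃ S, IsBottleneck G m S ∧ 100 * S.card ≤ 29 * N) ≤
      (N + 1) * (Real.exp 1 * (Real.exp 1 * (N : ℝ)⁻¹ ^ 2)) := by
  set I : Finset (Finset (Fin N) × Finset (Fin N) × Finset (Fin N)) := {x |
    Disjoint x.1 x.2.1 ∧ m ≤ (x.1 ∪ x.2.1).card ∧ m * x.2.1.card ≤ (x.1 ∪ x.2.1).card ∧
      m * x.2.2.card ≤ (x.1 ∪ x.2.1).card ∧ 100 * (x.1 ∪ x.2.1).card ≤ 29 * N}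
  have hI := hp.mem_Icc (by positivity) fun i => zero_le_one.trans (hW i)
  have hinv := sum_inv_card_pow_card_le (Fin N)
  have hfactorial := sum_factorial_div_card_pow_le (Fin N)
  rw [Fintype.card_fin] at hinv hfactorial
  calc
    _ ≤ graphProb p N fun G => ∃ x ∈ I, SeparatedForest x.1 (x.1 ∪ x.2.1) x.2.2 G := by
      refine graphProb_mono hI fun G ⟨S, hS, hsmall⟩ => ?_
      obtain ⟨R, hRS, hR, hparent⟩ :=
        exists_hasParentMap_of_le_card_innerComponent hS.le_card_innerComponent
      have hunion : S \ R ∪ R = S := Finset.sdiff_union_of_subset hRS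
      refine ⟨(S \ R, R, outerBoundary G S), ?_, ?_⟩
      · simpa only [I, Finset.mem_filter_univ, hunion] using
          ⟨Finset.sdiff_disjoint, hS.le_card, hR, hS.mul_card_outerBoundary_le, hsmall⟩
      · rw [hunion]
        exact ⟨hparent, fun x hx y hy => not_adj_of_mem_compl_union_outerBoundary hx hy⟩
    _ ≤ ∑ x ∈ I, x.1.card.factorial / (N : ℝ) ^ x.1.card *
        ((N : ℝ)⁻¹ ^ x.2.1.card * ((N : ℝ)⁻¹ ^ x.2.2.card * (N : ℝ)⁻¹ ^ 2)) := by
      refine (graphProb_exists_le_sum hI _ _).trans (Finset.sum_le_sum fun x hx => ?_)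
      obtain ⟨hKR, hS, hR, hT, hsmall⟩ := Finset.mem_filter_univ x |>.1 hx
      exact hp.graphProb_separatedForest_le_of_small hW hN hm hNm hKR hS hR hT hsmall
    _ ≤ ∑ x : Finset (Fin N) × Finset (Fin N) × Finset (Fin N),
        x.1.card.factorial / (N : ℝ) ^ x.1.card *
          ((N : ℝ)⁻¹ ^ x.2.1.card * ((N : ℝ)⁻¹ ^ x.2.2.card * (N : ℝ)⁻¹ ^ 2)) :=
      Finset.sum_le_sum_of_subset_of_nonneg (Finset.subset_univ _) fun _ _ _ => by positivity
    _ = (∑ K : Finset (Fin N), K.card.factorial / (N : ℝ) ^ K.card) *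
        ((∑ R : Finset (Fin N), (N : ℝ)⁻¹ ^ R.card) *
          ((∑ T : Finset (Fin N), (N : ℝ)⁻¹ ^ T.card) * (N : ℝ)⁻¹ ^ 2)) := by
      simp only [Fintype.sum_prod_type, ← Finset.mul_sum, ← Finset.sum_mul]
    _ ≤ _ := by gcongr

theorem graphProb_exists_large_bottleneck_le :
    graphProb p N (fun G => ∃ S, IsBottleneck G m S ∧ 29 * N ≤ 100 * S.card) ≤
      Real.exp 1 * Real.exp (-(N / 500)) := by
  set I : Finset (Finset (Fin N) × Finset (Fin N)) := {x | Disjoint x.1 x.2 ∧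
    m * x.2.card ≤ x.1.card ∧ 29 * N ≤ 100 * x.1.card ∧ 2 * x.1.card ≤ N}
  have hI := hp.mem_Icc (by positivity) fun i => zero_le_one.trans (hW i)
  have hinv := sum_inv_card_pow_card_le (Fin N)
  have hbinomial := Fintype.sum_pow_mul_eq_add_pow (Fin N) (9 / 25 : ℝ) (16 / 25)
  rw [Fintype.card_fin] at hinv hbinomial
  calc
    _ ≤ graphProb p N fun G => ∃ x ∈ I, SeparatedForest ∅ x.1 x.2 G := by
      refine graphProb_mono hI fun G ⟨S, hS, hlarge⟩ => ?_
      refine ⟨(S, outerBoundary G S), (Finset.mem_filter_univ _).2 ⟨?_,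
        hS.mul_card_outerBoundary_le, hlarge, ?_⟩, hasParentMap_empty G S,
        fun x hx y hy => not_adj_of_mem_compl_union_outerBoundary hx hy⟩
      · exact Finset.disjoint_right.2 fun y hy => (mem_outerBoundary.1 hy).1
      · simpa only [Fintype.card_fin] using hS.two_mul_card_le
    _ ≤ ∑ x ∈ I, (9 / 25) ^ x.1.card * (16 / 25) ^ (N - x.1.card) *
        ((N : ℝ)⁻¹ ^ x.2.card * Real.exp (-(N / 500))) := by
      refine (graphProb_exists_le_sum hI _ _).trans (Finset.sum_le_sum fun x hx => ?_)
      obtain ⟨hST, hT, hlarge, hhalf⟩ := Finset.mem_filter_univ x |>.1 hx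
      exact hp.graphProb_separatedForest_le_of_large hW hN hm hNm hST hT hlarge hhalf
    _ ≤ ∑ x : Finset (Fin N) × Finset (Fin N), (9 / 25) ^ x.1.card * (16 / 25) ^ (N - x.1.card) *
        ((N : ℝ)⁻¹ ^ x.2.card * Real.exp (-(N / 500))) :=
      Finset.sum_le_sum_of_subset_of_nonneg (Finset.subset_univ _) fun _ _ _ => by positivity
    _ = (9 / 25 + 16 / 25) ^ N *
        ((∑ T : Finset (Fin N), (N : ℝ)⁻¹ ^ T.card) * Real.exp (-(N / 500))) := by
      simp only [← hbinomial, Fintype.sum_prod_type, ← Finset.mul_sum, ← Finset.sum_mul]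
    _ = (∑ T : Finset (Fin N), (N : ℝ)⁻¹ ^ T.card) * Real.exp (-(N / 500)) := by norm_num
    _ ≤ _ := by gcongr

theorem graphProb_exists_bottleneck_le :
    graphProb p N (fun G => ∃ S, IsBottleneck G m S) ≤
      (2 * Real.exp 1 ^ 2 + 500 * Real.exp 1) / N := by
  have hI := hp.mem_Icc (by positivity) fun i => zero_le_one.trans (hW i)
  have hN' : (1 : ℝ) ≤ N := mod_cast hN
  have hexp : Real.exp (-(N / 500)) ≤ 500 / N := by
    rw [Real.exp_neg, ← inv_div (N : ℝ) 500]
    exact inv_anti₀ (by positivity) ((lt_add_one _).le.trans (Real.add_one_le_exp _))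
  calc
    _ ≤ graphProb p N fun G => (∃ S, IsBottleneck G m S ∧ 100 * S.card ≤ 29 * N) ∨
        ∃ S, IsBottleneck G m S ∧ 29 * N ≤ 100 * S.card :=
      graphProb_mono hI fun G ⟨S, hS⟩ =>
        (le_total (100 * S.card) (29 * N)).imp (fun h => ⟨S, hS, h⟩) fun h => ⟨S, hS, h⟩
    _ ≤ (N + 1) * (Real.exp 1 * (Real.exp 1 * (N : ℝ)⁻¹ ^ 2)) +
        Real.exp 1 * Real.exp (-(N / 500)) :=
      (graphProb_or_le hI _ _).trans <| add_le_add
        (hp.graphProb_exists_small_bottleneck_le hW hN hm hNm)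
        (hp.graphProb_exists_large_bottleneck_le hW hN hm hNm)
    _ ≤ (N + N) * (Real.exp 1 * (Real.exp 1 * (N : ℝ)⁻¹ ^ 2)) + Real.exp 1 * (500 / N) := by
      gcongr
    _ = _ := by field_simp; ring

end IsNorrosReittu

end BottleneckProbability

/-! ### Mixing of all components -/

theorem eventually_const_mul_log_pow_le_log_rpow (a : ℝ) (k : ℕ) {C : ℝ} (hC : k < C) :
    ∀ᶠ N : ℕ in atTop, a * Real.log N ^ k ≤ Real.log N ^ C := by
  have hlog : Tendsto (fun N : ℕ => Real.log N) atTop atTop :=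
    Real.tendsto_log_atTop.comp tendsto_natCast_atTop_atTop
  have hpow := (tendsto_rpow_atTop (sub_pos.2 hC)).comp hlog
  filter_upwards [hpow.eventually_ge_atTop a, hlog.eventually_gt_atTop 0] with N ha hpos
  calc a * Real.log N ^ k ≤ Real.log N ^ (C - k) * Real.log N ^ k := by gcongr; exact ha
    _ = Real.log N ^ C := by
      rw [← Real.rpow_natCast, ← Real.rpow_add hpos, sub_add_cancel]

theorem bottleneck_mixing_bound_le {x : ℝ} (hx : 1 ≤ x) :
    36 * (⌈5000 * x⌉₊ : ℝ) ^ 2 * (1 + x / 2) ≤ 54 * 5001 ^ 2 * x ^ 3 := by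
  have hceil : (⌈5000 * x⌉₊ : ℝ) ≤ 5001 * x := by
    linarith [Nat.ceil_lt_add_one (show 0 ≤ 5000 * x by linarith)]
  calc 36 * (⌈5000 * x⌉₊ : ℝ) ^ 2 * (1 + x / 2) ≤ 36 * (5001 * x) ^ 2 * (x + x / 2) := by gcongr
    _ = 54 * 5001 ^ 2 * x ^ 3 := by ring

section Mixing

variable {p : ℕ → ℕ → ℕ → ℝ} {W : ∀ N, Fin N → ℝ}

theorem tendsto_graphProb_forall_not_bottleneck (hp : ∀ N, IsNorrosReittu (p N) (3 / N) (W N))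
    (hW : ∀ N i, 1 ≤ W N i) :
    Tendsto (fun N : ℕ => graphProb (p N) N fun G => ∀ S, ¬IsBottleneck G ⌈5000 * Real.log N⌉₊ S)
      atTop (nhds 1) := by
  refine tendsto_graphProb_one_of_tendsto_graphProb_not_zero ?_
  simp only [not_forall, not_not]
  have hlog : Tendsto (fun N : ℕ => Real.log N) atTop atTop :=
    Real.tendsto_log_atTop.comp tendsto_natCast_atTop_atTop
  refine squeeze_zero' (.of_forall fun N => graphProb_nonneg ((hp N).mem_Icc (by positivity)
    fun i => zero_le_one.trans (hW N i)) _) ?_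
    (tendsto_const_div_atTop_nhds_zero_nat (2 * Real.exp 1 ^ 2 + 500 * Real.exp 1))
  filter_upwards [eventually_gt_atTop 0, hlog.eventually_ge_atTop 1] with N hN hlogN
  have hceil := Nat.le_ceil (5000 * Real.log N)
  refine (hp N).graphProb_exists_bottleneck_le (hW N) hN ?_ ?_
  · have : (1000 : ℝ) ≤ ⌈5000 * Real.log N⌉₊ := by linarith
    exact_mod_cast this
  · rw [← Real.log_le_iff_le_exp (by positivity)]
    linarith

theorem tendsto_graphProb_vsrwMixingTime_le (hp : ∀ N, IsNorrosReittu (p N) (3 / N) (W N))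
    (hW : ∀ N i, 1 ≤ W N i) {C : ℝ} (hC : 3 < C) :
    Tendsto (fun N : ℕ => graphProb (p N) N fun G =>
      ∀ v, vsrwMixingTime (G.induce {w | G.Reachable v w}) ≤ Real.log N ^ C) atTop (nhds 1) := by
  refine tendsto_graphProb_one_mono (fun N => (hp N).mem_Icc (by positivity) fun i =>
    zero_le_one.trans (hW N i)) (tendsto_graphProb_forall_not_bottleneck hp hW) ?_
  have hlog : Tendsto (fun N : ℕ => Real.log N) atTop atTop :=
    Real.tendsto_log_atTop.comp tendsto_natCast_atTop_atTop
  filter_upwards [hlog.eventually_ge_atTop 1,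
    eventually_const_mul_log_pow_le_log_rpow (54 * 5001 ^ 2) 3 (mod_cast hC)] with N hlogN hN
  intro G hG v
  refine (vsrwMixingTime_induce_reachable_le ?_ hG v).trans ?_
  · exact Nat.one_le_ceil_iff.2 (by positivity)
  · rw [Fintype.card_fin]
    exact (bottleneck_mixing_bound_le hlogN).trans hN

end Mixing

/-! ### Simplified Norros–Reittu graphs -/

/-- The vertex weights of the Simplified Norros–Reittu graph, normalised such that the mean in
`IsNorrosReittu` is `3 / N * W i * W j`; the shift makes the vertices 1-based. -/
def snrWeight (β γ : ℝ) (N : ℕ) (i : Fin N) : ℝ :=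
  √(β / 3) * (N : ℝ) ^ γ * ((i : ℝ) + 1) ^ (-γ)

theorem one_le_snrWeight {β γ : ℝ} (hβ : 3 ≤ β) (hγ : 0 ≤ γ) {N : ℕ} (i : Fin N) :
    1 ≤ snrWeight β γ N i := by
  have hi : (i : ℝ) + 1 ≤ N := mod_cast i.2
  have hsqrt : 1 ≤ √(β / 3) := Real.one_le_sqrt.2 (by linarith)
  have hpow : 1 ≤ (N : ℝ) ^ γ * ((i : ℝ) + 1) ^ (-γ) := by
    rw [Real.rpow_neg (by positivity), ← div_eq_mul_inv, one_le_div (by positivity)]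
    gcongr
  rw [snrWeight, mul_assoc]
  exact one_le_mul_of_one_le_of_one_le hsqrt hpow

theorem isNorrosReittu_snrEdgeProb {β : ℝ} (hβ : 0 ≤ β) (γ : ℝ) (N : ℕ) :
    IsNorrosReittu (snrEdgeProb β γ N) (3 / N) (snrWeight β γ N) := by
  intro i j
  have hN : (0 : ℝ) < N := mod_cast i.pos
  have hpow : (N : ℝ) ^ (2 * γ - 1) = (N : ℝ) ^ γ * (N : ℝ) ^ γ / N := by
    rw [Real.rpow_sub_one hN.ne', two_mul, Real.rpow_add hN]
  have hsqrt : √(β / 3) * √(β / 3) = β / 3 := Real.mul_self_sqrt (by positivity)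
  simp only [snrEdgeProb, snrWeight, hpow, Nat.cast_add, Nat.cast_one]
  congr 3
  linear_combination (-(3 / N) * (N : ℝ) ^ γ * (N : ℝ) ^ γ * ((i : ℝ) + 1) ^ (-γ) *
    ((j : ℝ) + 1) ^ (-γ)) * hsqrt

theorem snrEdgeProb_mem_Icc {β : ℝ} (hβ : 0 ≤ β) (γ : ℝ) {N : ℕ} (i j : Fin N) :
    snrEdgeProb β γ N (i + 1) (j + 1) ∈ Set.Icc (0 : ℝ) 1 :=
  (isNorrosReittu_snrEdgeProb hβ γ N).mem_Icc (by positivity)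
    (fun i => by unfold snrWeight; positivity) i j

theorem vsrw_mixing_snr_giant_general {β γ C : ℝ} (hβ : 3 ≤ β) (hγ : 0 ≤ γ) (hC : 3 < C) :
    Tendsto (fun N : ℕ => snrProb β γ N fun G =>
      ∀ v, vsrwMixingTime (G.induce {w | G.Reachable v w}) ≤ Real.log N ^ C) atTop (nhds 1) :=
  tendsto_graphProb_vsrwMixingTime_le (isNorrosReittu_snrEdgeProb (by positivity) γ)
    (fun _ => one_le_snrWeight hβ hγ) hC

/-- For `β ≥ 3` and `γ ∈ [0,1)`, there is `C > 0` such that with probability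
tending to `1` as `N → ∞`, the variable speed random walk on the largest connected component
of the Simplified Norros–Reittu graph `G_N` has mixing time at most `log^C N`. -/
theorem vsrw_mixing_snr_giant
    (β γ : ℝ) (hβ : 3 ≤ β) (hγ : γ ∈ Set.Ico (0 : ℝ) 1) :
    ∃ C > (0 : ℝ),
      Tendsto
        (fun N : ℕ =>
          snrProb β γ N (fun G =>
            ∀ v : Fin N, (∀ w : Fin N, compCard G w ≤ compCard G v) →
              vsrwMixingTime (G.induce {w : Fin N | G.Reachable v w}) ≤ Real.log N ^ C))
        atTop (nhds 1) := by
  exact ⟨4, by norm_num, tendsto_graphProb_one_mono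
    (fun N => snrEdgeProb_mem_Icc (by positivity) γ)
    (vsrw_mixing_snr_giant_general hβ hγ.1 (C := 4) (by norm_num))
    (.of_forall fun N G hG v _ => hG v)⟩
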